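/- Let n ≥ 2, 1/2 < s < 1, and let L, C, η₀ > 0. Let u : ℝⁿ → ℝ be Lipschitz with constant L and semiconcave with constant C, and suppose u satisfies the ellipticity bound η₀ at a point x ∈ ℝⁿ. Then for every θ with 0 < θ < (μ₀/(n·μ₁))^{(n−1)/(2s)}, the infimum defining the fractional Monge–Ampère operator is not changed by restricting to uniformly elliptic matrices: inf{ L_A u(x) : A symmetric positive definite, det A = 1 } = inf{ L_A u(x) : A symmetric positive definite, det A = 1, every eigenvalue of A is ≥ θ }. -/

import Mathlib

open MeasureTheory

noncomputable def surfOmega (k : ℕ) : ℝ := 2 * Real.pi ^ ((k : ℝ) / 2) / Real.Gamma ((k : ℝ) / 2)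

noncomputable def mu1 (s L C : ℝ) : ℝ := L ^ (2 - 2 * s) * (C / 2) ^ (2 * s - 1) / (2 * s - 1)

noncomputable def C1 (n : ℕ) (s L C : ℝ) : ℝ :=
  (Real.sqrt Real.pi * Real.Gamma (((n : ℝ) - 1) / 2 + s) / Real.Gamma ((n : ℝ) / 2 + s)) *
    (mu1 s L C * surfOmega (n - 1) / 2)

noncomputable def C2 (n : ℕ) (s : ℝ) : ℝ :=
  surfOmega (n - 1) * Real.Gamma (((n : ℝ) - 1) / 2) * Real.Gamma (s + 1 / 2) /
    (2 * Real.Gamma ((n : ℝ) / 2 + s))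

noncomputable def mu0 (n : ℕ) (s L C η₀ : ℝ) : ℝ :=
  C1 n s L C ^ (1 - (n : ℝ)) * (C2 n s)⁻¹ * (η₀ / 2) ^ (n : ℝ)

/-- Second-order increment `δ(u,x,y) = u(x+y) + u(x-y) - 2u(x)`. -/
noncomputable def delta2 {n : ℕ} (u : EuclideanSpace ℝ (Fin n) → ℝ)
    (x y : EuclideanSpace ℝ (Fin n)) : ℝ :=
  u (x + y) + u (x - y) - 2 * u x

/-- Integrand `δ(u,x,y)/|A⁻¹ y|^(n+2s)`. -/
noncomputable def kernelA {n : ℕ} (s : ℝ) (A : Matrix (Fin n) (Fin n) ℝ)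
    (u : EuclideanSpace ℝ (Fin n) → ℝ) (x y : EuclideanSpace ℝ (Fin n)) : ℝ :=
  delta2 u x y /
    ‖(EuclideanSpace.equiv (Fin n) ℝ).symm (A⁻¹.mulVec (EuclideanSpace.equiv (Fin n) ℝ y))‖ ^
      ((n : ℝ) + 2 * s)

/-- The linear operator `L_A u(x) = (1/2) ∫ δ(u,x,y)/|A⁻¹ y|^(n+2s) dy`. -/
noncomputable def LA {n : ℕ} (s : ℝ) (A : Matrix (Fin n) (Fin n) ℝ)
    (u : EuclideanSpace ℝ (Fin n) → ℝ) (x : EuclideanSpace ℝ (Fin n)) : ℝ :=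
  (1 / 2) * ∫ y, kernelA s A u x y

/-!
Testing the ellipticity bound on the matrices acting as `b` on a line `ℝ e` and as `a` on its
orthogonal complement, with `a ^ (n - 1) * b = 1`, and averaging over the reflection in that line
gives `η₀ ≤ C₁ a ^ (2 s) + C₂ b ^ (2 s) H(e)`, where `H(e)` is `1 - s` times the integral of
`δ(u, x, r e) r ^ (-1 - 2 s)` over `r > 0`. Optimizing in `a` yields `μ₀ ≤ H(e)` for almost every
unit vector `e`.

The increments satisfy `δ(u, x, y) ≤ m(|y|)` with `m(r) = min (C r²) (2 L r)`, whose integral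
against `r ^ (-1 - 2 s)` is `μ₁ / (1 - s)`. In polar coordinates the lower bound on `H` therefore
gives `2 L_A u(x) ≥ (μ₀ / μ₁) I(A)`, where `I(A)` is the integral of `m(|y|)` against
`|A⁻¹ y| ^ (-n - 2 s)`, while `2 L_1 u(x) ≤ I(1)`.

If `A` has an eigenvalue below `θ`, then `det A = 1` forces an eigenvalue `l` with
`θ l ^ (n - 1) ≥ 1`, and `I(A) ≥ l ^ (2 s) / n * I(1)`. The bound on `θ` then makes
`L_1 u(x) ≤ L_A u(x)`, so discarding `A` does not change the infimum.
-/

section BracketIntegral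

open Set Module

/-- The value of the integral of the Japanese bracket `(1 + ‖w‖ ^ 2) ^ (-p / 2)` over a
`d`-dimensional Euclidean space, for `d < p`. -/
noncomputable def bracketIntegral (d : ℕ) (p : ℝ) : ℝ :=
  Real.pi ^ ((d : ℝ) / 2) * Real.Gamma ((p - d) / 2) / Real.Gamma (p / 2)

theorem integral_rpow_sub_one_mul_exp_neg_mul {a c : ℝ} (ha : 0 < a) (hc : 0 < c) :
    ∫ t in Ioi (0 : ℝ), t ^ (a - 1) * Real.exp (-(c * t)) = c ^ (-a) * Real.Gamma a := by
  rw [Real.integral_rpow_mul_exp_neg_mul_Ioi ha hc, one_div, Real.inv_rpow hc.le,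
    Real.rpow_neg hc.le]

theorem rpow_sq_add_norm_div_sq {E : Type*} [NormedAddCommGroup E] [NormedSpace ℝ E] (p : ℝ)
    {β ρ : ℝ} (hβ : 0 < β) (hρ : 0 < ρ) (w : E) :
    (ρ ^ 2 + (‖w‖ / β) ^ 2) ^ (-p / 2) =
      ρ ^ (-p) * (1 + ‖(β * ρ)⁻¹ • w‖ ^ 2) ^ (-p / 2) := by
  have factor : ρ ^ 2 + (‖w‖ / β) ^ 2 = ρ ^ (2 : ℝ) * (1 + ‖(β * ρ)⁻¹ • w‖ ^ 2) := by
    rw [norm_smul, Real.norm_of_nonneg (by positivity), Real.rpow_two]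
    field_simp
  rw [factor, Real.mul_rpow (by positivity) (by positivity), ← Real.rpow_mul hρ.le]
  ring_nf

variable {E : Type*} [NormedAddCommGroup E] [InnerProductSpace ℝ E] [FiniteDimensional ℝ E]
  [MeasurableSpace E] [BorelSpace E]

theorem integrable_rpow_mul_exp_neg_one_add_norm_sq_mul {p : ℝ} (hp : (finrank ℝ E : ℝ) < p) :
    Integrable (Function.uncurry fun (w : E) (t : ℝ) =>
      t ^ (p / 2 - 1) * Real.exp (-((1 + ‖w‖ ^ 2) * t)))
      ((volume : Measure E).prod (volume.restrict (Ioi (0 : ℝ)))) := by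
  have hp0 : 0 < p / 2 := half_pos ((Nat.cast_nonneg _).trans_lt hp)
  have gamma_slice (w : E) : ∫ t in Ioi (0 : ℝ),
      t ^ (p / 2 - 1) * Real.exp (-((1 + ‖w‖ ^ 2) * t)) =
        (1 + ‖w‖ ^ 2) ^ (-p / 2) * Real.Gamma (p / 2) := by
    rw [integral_rpow_sub_one_mul_exp_neg_mul hp0 (by positivity), neg_div]
  rw [integrable_prod_iff (Measurable.aestronglyMeasurable (by fun_prop))]
  refine ⟨.of_forall fun w => .of_integral_ne_zero ?_, ?_⟩
  · have := Real.Gamma_pos_of_pos hp0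
    simp only [Function.uncurry_apply_pair, gamma_slice]
    positivity
  · refine ((integrable_rpow_neg_one_add_norm_sq hp).mul_const (Real.Gamma (p / 2))).congr
      (.of_forall fun w => ?_)
    dsimp only
    rw [← gamma_slice]
    refine setIntegral_congr_fun measurableSet_Ioi fun t (ht : 0 < t) => ?_
    exact (Real.norm_of_nonneg (by positivity)).symm

theorem integral_rpow_mul_exp_neg_one_add_norm_sq_mul (p : ℝ) {t : ℝ} (ht : 0 < t) :
    ∫ w : E, t ^ (p / 2 - 1) * Real.exp (-((1 + ‖w‖ ^ 2) * t)) =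
      Real.pi ^ ((finrank ℝ E : ℝ) / 2) *
        (Real.exp (-t) * t ^ ((p - finrank ℝ E) / 2 - 1)) := by
  have gaussian_factor (w : E) : t ^ (p / 2 - 1) * Real.exp (-((1 + ‖w‖ ^ 2) * t)) =
      t ^ (p / 2 - 1) * Real.exp (-t) * Real.exp (-t * ‖w‖ ^ 2) := by
    rw [mul_assoc, ← Real.exp_add]
    ring_nf
  simp only [gaussian_factor]
  rw [integral_const_mul, GaussianFourier.integral_rexp_neg_mul_sq_norm ht,
    Real.div_rpow Real.pi_pos.le ht.le,
    show (p - finrank ℝ E) / 2 - 1 = p / 2 - 1 - finrank ℝ E / 2 by ring,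
    Real.rpow_sub ht (p / 2 - 1)]
  ring

/-- Write the bracket as a Gamma integral of Gaussians and exchange the integrals. -/
theorem integral_rpow_neg_one_add_norm_sq {p : ℝ} (hp : (finrank ℝ E : ℝ) < p) :
    ∫ w : E, (1 + ‖w‖ ^ 2) ^ (-p / 2) = bracketIntegral (finrank ℝ E) p := by
  have hp0 : 0 < p / 2 := half_pos ((Nat.cast_nonneg _).trans_lt hp)
  rw [bracketIntegral, eq_div_iff (Real.Gamma_pos_of_pos hp0).ne', ← integral_mul_const]
  calc ∫ w : E, (1 + ‖w‖ ^ 2) ^ (-p / 2) * Real.Gamma (p / 2)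
      = ∫ w : E, ∫ t in Ioi (0 : ℝ), t ^ (p / 2 - 1) * Real.exp (-((1 + ‖w‖ ^ 2) * t)) := by
        refine integral_congr_ae (.of_forall fun w => ?_)
        dsimp only
        rw [integral_rpow_sub_one_mul_exp_neg_mul hp0 (by positivity), neg_div]
    _ = ∫ t in Ioi (0 : ℝ), ∫ w : E, t ^ (p / 2 - 1) * Real.exp (-((1 + ‖w‖ ^ 2) * t)) :=
        integral_integral_swap (integrable_rpow_mul_exp_neg_one_add_norm_sq_mul hp)
    _ = ∫ t in Ioi (0 : ℝ), Real.pi ^ ((finrank ℝ E : ℝ) / 2) *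
          (Real.exp (-t) * t ^ ((p - finrank ℝ E) / 2 - 1)) :=
        setIntegral_congr_fun measurableSet_Ioi fun _ ht =>
          integral_rpow_mul_exp_neg_one_add_norm_sq_mul p ht
    _ = Real.pi ^ ((finrank ℝ E : ℝ) / 2) * Real.Gamma ((p - finrank ℝ E) / 2) := by
        rw [integral_const_mul, ← Real.Gamma_eq_integral (by linarith)]

theorem integrable_rpow_sq_add_norm_div_sq {p β ρ : ℝ} (hp : (finrank ℝ E : ℝ) < p)
    (hβ : 0 < β) (hρ : 0 < ρ) :
    Integrable fun w : E => (ρ ^ 2 + (‖w‖ / β) ^ 2) ^ (-p / 2) := by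
  simp only [rpow_sq_add_norm_div_sq p hβ hρ]
  exact ((integrable_rpow_neg_one_add_norm_sq hp).comp_smul (by positivity)).const_mul _

theorem integral_rpow_sq_add_norm_div_sq {p β ρ : ℝ} (hp : (finrank ℝ E : ℝ) < p)
    (hβ : 0 < β) (hρ : 0 < ρ) :
    ∫ w : E, (ρ ^ 2 + (‖w‖ / β) ^ 2) ^ (-p / 2) =
      β ^ finrank ℝ E * bracketIntegral (finrank ℝ E) p * ρ ^ (finrank ℝ E - p) := by
  simp only [rpow_sq_add_norm_div_sq p hβ hρ]
  rw [integral_const_mul, Measure.integral_comp_smul volume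
      (fun w : E => (1 + ‖w‖ ^ 2) ^ (-p / 2)) ((β * ρ)⁻¹), smul_eq_mul,
    abs_of_nonneg (by positivity), inv_pow, inv_inv, mul_pow, Real.rpow_sub hρ,
    Real.rpow_natCast, Real.rpow_neg hρ.le, integral_rpow_neg_one_add_norm_sq hp]
  ring

end BracketIntegral

section PolarCoordinates

open Set Module

theorem integrable_volumeIoiPow_iff (k : ℕ) (f : ℝ → ℝ) :
    Integrable (fun r : Ioi (0 : ℝ) => f r) (Measure.volumeIoiPow k) ↔
      IntegrableOn (fun r => r ^ k * f r) (Ioi 0) := by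
  rw [Measure.volumeIoiPow, integrableOn_iff_comap_subtypeVal measurableSet_Ioi]
  refine (integrable_withDensity_iff_integrable_smul (f := fun r : Ioi (0 : ℝ) =>
    ((r : ℝ) ^ k).toNNReal) (by fun_prop)).trans (integrable_congr (.of_forall fun r => ?_))
  exact congrArg (· * f r) (Real.coe_toNNReal _ (pow_nonneg r.2.out.le k))

theorem integral_volumeIoiPow (k : ℕ) (f : ℝ → ℝ) :
    ∫ r : Ioi (0 : ℝ), f r ∂Measure.volumeIoiPow k = ∫ r in Ioi (0 : ℝ), r ^ k * f r := by
  rw [← integral_subtype_comap measurableSet_Ioi (fun r => r ^ k * f r), Measure.volumeIoiPow]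
  refine (integral_withDensity_eq_integral_smul (f := fun r : Ioi (0 : ℝ) =>
    ((r : ℝ) ^ k).toNNReal) (by fun_prop) _).trans (integral_congr_ae (.of_forall fun r => ?_))
  exact congrArg (· * f r) (Real.coe_toNNReal _ (pow_nonneg r.2.out.le k))

theorem integral_rpow_comp_mul_left (q : ℝ → ℝ) (s : ℝ) {c : ℝ} (hc : 0 < c) :
    ∫ r in Ioi (0 : ℝ), q (c * r) * r ^ (-1 - 2 * s) =
      c ^ (2 * s) * ∫ r in Ioi (0 : ℝ), q r * r ^ (-1 - 2 * s) := by
  have rescale : ∀ r ∈ Ioi (0 : ℝ), q (c * r) * r ^ (-1 - 2 * s) =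
      c ^ (1 + 2 * s) * (q (c * r) * (c * r) ^ (-1 - 2 * s)) := fun r (hr : 0 < r) => by
    rw [Real.mul_rpow hc.le hr.le, show (-1 - 2 * s) = -(1 + 2 * s) by ring,
      Real.rpow_neg hc.le]
    field_simp
  rw [setIntegral_congr_fun measurableSet_Ioi rescale, integral_const_mul,
    integral_comp_mul_left_Ioi (fun r => q r * r ^ (-1 - 2 * s)) 0 hc, mul_zero, smul_eq_mul,
    Real.rpow_add hc, Real.rpow_one]
  field_simp

variable {E : Type*} [NormedAddCommGroup E] [NormedSpace ℝ E]

/-- The integral of `f` along the ray through `w`, against the radial part `r ^ (-1 - 2 * s)` of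
the fractional kernel in polar coordinates. -/
noncomputable def rayIntegral (s : ℝ) (f : E → ℝ) (w : E) : ℝ :=
  ∫ r in Ioi (0 : ℝ), f (r • w) * r ^ (-1 - 2 * s)

theorem comp_smul_homeomorphUnitSphereProd (f : E → ℝ) :
    (fun q : Metric.sphere (0 : E) 1 × Ioi (0 : ℝ) => f (q.2.1 • q.1.1)) ∘
      homeomorphUnitSphereProd E = fun y : ({0}ᶜ : Set E) => f y := by
  funext y
  exact congrArg (f ·.1) ((homeomorphUnitSphereProd E).symm_apply_apply y)

theorem pow_mul_mul_eq_of_homogeneous [FiniteDimensional ℝ E] [Nontrivial E] {s : ℝ} {K : E → ℝ}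
    (K_smul : ∀ r : ℝ, 0 < r → ∀ w, K (r • w) = r ^ (-(finrank ℝ E + 2 * s)) * K w)
    (f : E → ℝ) (w : E) {r : ℝ} (hr : 0 < r) :
    r ^ (finrank ℝ E - 1) * (f (r • w) * K (r • w)) = K w * (f (r • w) * r ^ (-1 - 2 * s)) := by
  have hpow : r ^ (-1 - 2 * s) = r ^ (finrank ℝ E - 1) * r ^ (-(finrank ℝ E + 2 * s)) := by
    rw [← Real.rpow_natCast, ← Real.rpow_add hr, Nat.cast_pred finrank_pos]
    ring_nf
  rw [K_smul r hr, hpow]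
  ring

variable [FiniteDimensional ℝ E] [MeasurableSpace E] [BorelSpace E]
  (μ : Measure E) [μ.IsAddHaarMeasure]

theorem integrable_polar {f : E → ℝ} (hf : Integrable f μ) :
    Integrable (fun q : Metric.sphere (0 : E) 1 × Ioi (0 : ℝ) => f (q.2.1 • q.1.1))
      (μ.toSphere.prod (Measure.volumeIoiPow (finrank ℝ E - 1))) := by
  rw [← μ.measurePreserving_homeomorphUnitSphereProd.integrable_comp_emb
    (Homeomorph.measurableEmbedding _), comp_smul_homeomorphUnitSphereProd]
  exact (integrableOn_iff_comap_subtypeVal (measurableSet_singleton _).compl).1 hf.integrableOn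

theorem integral_polar [Nontrivial E] (f : E → ℝ) :
    ∫ y, f y ∂μ = ∫ q : Metric.sphere (0 : E) 1 × Ioi (0 : ℝ), f (q.2.1 • q.1.1)
      ∂(μ.toSphere.prod (Measure.volumeIoiPow (finrank ℝ E - 1))) := by
  rw [← μ.measurePreserving_homeomorphUnitSphereProd.integral_comp
    (Homeomorph.measurableEmbedding _)]
  change _ = integral _ ((fun q : Metric.sphere (0 : E) 1 × Ioi (0 : ℝ) => f (q.2.1 • q.1.1)) ∘
    homeomorphUnitSphereProd E)
  rw [comp_smul_homeomorphUnitSphereProd,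
    integral_subtype_comap (measurableSet_singleton _).compl f, restrict_compl_singleton]

theorem integral_mul_le_of_rayIntegral_le [Nontrivial E] {s : ℝ} {f g K : E → ℝ}
    (K_pos : ∀ w ≠ 0, 0 < K w)
    (K_smul : ∀ r : ℝ, 0 < r → ∀ w, K (r • w) = r ^ (-(finrank ℝ E + 2 * s)) * K w)
    (hf : Integrable (fun y => f y * K y) μ) (hg : Integrable (fun y => g y * K y) μ)
    (hfg : ∀ w : E, ‖w‖ = 1 →
      IntegrableOn (fun r : ℝ => g (r • w) * r ^ (-1 - 2 * s)) (Ioi 0) →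
      rayIntegral s f w ≤ rayIntegral s g w) :
    ∫ y, f y * K y ∂μ ≤ ∫ y, g y * K y ∂μ := by
  have radial (h : E → ℝ) (w : E) : ∫ r : Ioi (0 : ℝ), h (r.1 • w) * K (r.1 • w)
      ∂Measure.volumeIoiPow (finrank ℝ E - 1) = K w * rayIntegral s h w := by
    rw [integral_volumeIoiPow _ fun r => h (r • w) * K (r • w), rayIntegral, ← integral_const_mul]
    exact setIntegral_congr_fun measurableSet_Ioi fun r hr =>
      pow_mul_mul_eq_of_homogeneous K_smul h w hr
  have hf' := integrable_polar μ hf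
  have hg' := integrable_polar μ hg
  rw [integral_polar μ fun y => f y * K y, integral_polar μ fun y => g y * K y,
    integral_prod _ hf', integral_prod _ hg']
  refine integral_mono_ae hf'.integral_prod_left hg'.integral_prod_left ?_
  filter_upwards [hg'.prod_right_ae] with w hw
  have hKw : 0 < K w := K_pos w (ne_zero_of_mem_unit_sphere w)
  rw [radial, radial]
  refine mul_le_mul_of_nonneg_left (hfg w (by simp) ?_) hKw.le
  have ray := (integrable_volumeIoiPow_iff _ fun r => g (r • w.1) * K (r • w.1)).1 hw
  exact (integrable_const_mul_iff hKw.ne'.isUnit _).1 (ray.congr_fun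
    (fun r hr => pow_mul_mul_eq_of_homogeneous K_smul g w.1 hr) measurableSet_Ioi)

end PolarCoordinates

section AnisotropicKernel

open Set Module

variable {E : Type*} [NormedAddCommGroup E] [NormedSpace ℝ E]

/-- The kernel `‖T y‖ ^ (-(d + 2 * s))`, with `d` the dimension, of a fractional operator of order
`2 * s`. At `y = 0` it takes the junk value `0` when `0 < s`. -/
noncomputable def anisotropicKernel (s : ℝ) (T : E ≃ₗ[ℝ] E) (y : E) : ℝ :=
  ‖T y‖ ^ (-(finrank ℝ E + 2 * s))

theorem anisotropicKernel_zero {s : ℝ} (hs : 0 < s) (T : E ≃ₗ[ℝ] E) :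
    anisotropicKernel s T 0 = 0 := by
  rw [anisotropicKernel, map_zero, norm_zero, Real.zero_rpow (neg_ne_zero.2 (by positivity))]

theorem anisotropicKernel_pos (s : ℝ) (T : E ≃ₗ[ℝ] E) {w : E} (hw : w ≠ 0) :
    0 < anisotropicKernel s T w :=
  Real.rpow_pos_of_pos (norm_pos_iff.2 (T.map_ne_zero_iff.2 hw)) _

theorem anisotropicKernel_nonneg (s : ℝ) (T : E ≃ₗ[ℝ] E) (w : E) :
    0 ≤ anisotropicKernel s T w :=
  Real.rpow_nonneg (norm_nonneg _) _

theorem anisotropicKernel_smul (s : ℝ) (T : E ≃ₗ[ℝ] E) (r : ℝ) (hr : 0 < r) (w : E) :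
    anisotropicKernel s T (r • w) = r ^ (-(finrank ℝ E + 2 * s)) * anisotropicKernel s T w := by
  rw [anisotropicKernel, map_smul, norm_smul, Real.norm_of_nonneg hr.le,
    Real.mul_rpow hr.le (norm_nonneg _), anisotropicKernel]

theorem rayIntegral_comp_norm (s : ℝ) (m : ℝ → ℝ) (T : E ≃ₗ[ℝ] E) {w : E} (hw : w ≠ 0) :
    rayIntegral s (fun y => m ‖T y‖) w =
      ‖T w‖ ^ (2 * s) * ∫ r in Ioi (0 : ℝ), m r * r ^ (-1 - 2 * s) := by
  rw [← integral_rpow_comp_mul_left m s (norm_pos_iff.2 (T.map_ne_zero_iff.2 hw)), rayIntegral]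
  refine setIntegral_congr_fun measurableSet_Ioi fun r (hr : 0 < r) => ?_
  rw [map_smul, norm_smul, Real.norm_of_nonneg hr.le, mul_comm r]

variable [FiniteDimensional ℝ E]

theorem exists_anisotropicKernel_le {s : ℝ} (hs : 0 < s) (T : E ≃ₗ[ℝ] E) :
    ∃ c : ℝ, 0 ≤ c ∧
      ∀ y, anisotropicKernel s T y ≤ c * anisotropicKernel s (LinearEquiv.refl ℝ E) y := by
  set κ := ‖T.symm.toContinuousLinearEquiv.toContinuousLinearMap‖
  refine ⟨κ ^ (finrank ℝ E + 2 * s), by positivity, fun y => ?_⟩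
  rcases eq_or_ne y 0 with rfl | hy
  · simp only [anisotropicKernel_zero hs, mul_zero, le_refl]
  have norm_le : ‖y‖ ≤ κ * ‖T y‖ := by
    simpa using T.symm.toContinuousLinearEquiv.toContinuousLinearMap.le_opNorm (T y)
  have hκ : 0 < κ := pos_of_mul_pos_left ((norm_pos_iff.2 hy).trans_le norm_le) (norm_nonneg _)
  calc ‖T y‖ ^ (-(finrank ℝ E + 2 * s))
      ≤ (κ⁻¹ * ‖y‖) ^ (-(finrank ℝ E + 2 * s)) :=
        Real.rpow_le_rpow_of_nonpos (by positivity) ((inv_mul_le_iff₀ hκ).2 norm_le)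
          (neg_nonpos.2 (by positivity))
    _ = κ ^ (finrank ℝ E + 2 * s) * ‖y‖ ^ (-(finrank ℝ E + 2 * s)) := by
        rw [Real.mul_rpow (by positivity) (norm_nonneg _), Real.rpow_neg (by positivity),
          Real.inv_rpow hκ.le, inv_inv]

variable [MeasurableSpace E] [BorelSpace E]

theorem measurable_anisotropicKernel (s : ℝ) (T : E ≃ₗ[ℝ] E) :
    Measurable (anisotropicKernel s T) :=
  (T.toContinuousLinearEquiv.continuous.norm.measurable).pow_const _

theorem integrable_of_refl_anisotropicKernel {s : ℝ} {μ : Measure E} (hs : 0 < s) {f : E → ℝ}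
    (hf : Integrable (fun y => f y * anisotropicKernel s (LinearEquiv.refl ℝ E) y) μ)
    (T : E ≃ₗ[ℝ] E) : Integrable (fun y => f y * anisotropicKernel s T y) μ := by
  obtain ⟨c, hc, hle⟩ := exists_anisotropicKernel_le hs T
  have quotient_bdd := hf.bdd_mul (c := c)
    (f := fun y => anisotropicKernel s T y / anisotropicKernel s (LinearEquiv.refl ℝ E) y)
    ((measurable_anisotropicKernel s T).div
      (measurable_anisotropicKernel s _)).aestronglyMeasurable
    (.of_forall fun y => by
      rw [Real.norm_of_nonneg (div_nonneg (anisotropicKernel_nonneg _ _ _)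
        (anisotropicKernel_nonneg _ _ _))]
      exact div_le_of_le_mul₀ (anisotropicKernel_nonneg _ _ _) hc (hle y))
  refine quotient_bdd.congr (.of_forall fun y => ?_)
  dsimp only
  rcases eq_or_ne y 0 with rfl | hy
  · simp only [anisotropicKernel_zero hs, mul_zero]
  · have := (anisotropicKernel_pos s (LinearEquiv.refl ℝ E) hy).ne'
    field_simp

theorem measurePreserving_of_abs_det_eq_one (μ : Measure E) [μ.IsAddHaarMeasure] (T : E ≃ₗ[ℝ] E)
    (hT : |LinearMap.det (T : E →ₗ[ℝ] E)| = 1) : MeasurePreserving T μ μ := by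
  refine ⟨T.toContinuousLinearEquiv.continuous.measurable, ?_⟩
  have := μ.map_linearMap_addHaar_eq_smul_addHaar (f := (T : E →ₗ[ℝ] E)) T.isUnit_det'.ne_zero
  rw [abs_inv, hT, inv_one, ENNReal.ofReal_one, one_smul] at this
  exact this

variable [Nontrivial E]

theorem integrable_radial_mul_anisotropicKernel {s : ℝ} (μ : Measure E) [μ.IsAddHaarMeasure]
    (hs : 0 < s) {m : ℝ → ℝ}
    (hm : IntegrableOn (fun r => m r * r ^ (-1 - 2 * s)) (Ioi 0)) (T : E ≃ₗ[ℝ] E) :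
    Integrable (fun y => m ‖y‖ * anisotropicKernel s T y) μ := by
  refine integrable_of_refl_anisotropicKernel hs ?_ T
  refine (integrable_fun_norm_addHaar μ
    (f := fun r => m r * r ^ (-(finrank ℝ E + 2 * s)))).2 ?_
  refine hm.congr_fun (fun r (hr : 0 < r) => ?_) measurableSet_Ioi
  dsimp only
  rw [smul_eq_mul, mul_left_comm, ← Real.rpow_natCast, ← Real.rpow_add hr,
    Nat.cast_pred finrank_pos]
  ring_nf

/-- The integral of the radial profile `m ‖y‖` against the anisotropic kernel of `T`. -/
noncomputable def radialKernelIntegral (s : ℝ) (m : ℝ → ℝ) (μ : Measure E) (T : E ≃ₗ[ℝ] E) : ℝ :=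
  ∫ y, m ‖y‖ * anisotropicKernel s T y ∂μ

theorem mul_radialKernelIntegral_le {s : ℝ} (μ : Measure E) [μ.IsAddHaarMeasure] (hs : 0 < s)
    {m : ℝ → ℝ} (hm : IntegrableOn (fun r => m r * r ^ (-1 - 2 * s)) (Ioi 0)) (T : E ≃ₗ[ℝ] E)
    {f : E → ℝ} (hf : Integrable (fun y => f y * anisotropicKernel s T y) μ) {c : ℝ}
    (hc : ∀ w : E, ‖w‖ = 1 →
      IntegrableOn (fun r : ℝ => f (r • w) * r ^ (-1 - 2 * s)) (Ioi 0) →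
      c * ∫ r in Ioi (0 : ℝ), m r * r ^ (-1 - 2 * s) ≤ rayIntegral s f w) :
    c * radialKernelIntegral s m μ T ≤ ∫ y, f y * anisotropicKernel s T y ∂μ := by
  rw [radialKernelIntegral, ← integral_const_mul]
  simp only [← mul_assoc]
  refine integral_mul_le_of_rayIntegral_le μ (fun w => anisotropicKernel_pos s T)
    (anisotropicKernel_smul s T) ?_ hf fun w hw ray => ?_
  · simpa only [mul_assoc] using (integrable_radial_mul_anisotropicKernel μ hs hm T).const_mul c
  · have := rayIntegral_comp_norm s (fun r => c * m r) (LinearEquiv.refl ℝ E)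
      (norm_ne_zero_iff.1 (hw ▸ one_ne_zero))
    simp only [LinearEquiv.refl_apply, hw, Real.one_rpow, one_mul, mul_assoc,
      integral_const_mul] at this
    exact this.trans_le (hc w hw ray)

end AnisotropicKernel

section RadialMoments

open Set Module
open scoped RealInnerProductSpace

theorem sq_mul_rpow_le_rpow_two_mul {s l t τ : ℝ} (hs : 0 < s) (hs1 : s ≤ 1) (hl : 0 ≤ l)
    (ht : |t| ≤ 1) (hτ : l * |t| ≤ τ) : t ^ 2 * l ^ (2 * s) ≤ τ ^ (2 * s) := by
  calc t ^ 2 * l ^ (2 * s) ≤ |t| ^ (2 * s) * l ^ (2 * s) := by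
        gcongr
        rw [← sq_abs, ← Real.rpow_two]
        exact Real.rpow_le_rpow_of_exponent_ge_of_imp (abs_nonneg t) ht (by linarith) (by grind)
    _ = (l * |t|) ^ (2 * s) := by rw [Real.mul_rpow hl (abs_nonneg t), mul_comm]
    _ ≤ τ ^ (2 * s) := by gcongr

variable {E : Type*} [NormedAddCommGroup E] [InnerProductSpace ℝ E]

theorem rayIntegral_inner_sq_div_mul_le {s : ℝ} (hs : 0 < s) (hs1 : s ≤ 1) {m : ℝ → ℝ}
    (hm0 : ∀ r, 0 < r → 0 ≤ m r) (T : E ≃ₗ[ℝ] E) {v : E} (hv : ‖v‖ = 1) {l : ℝ} (hl : 0 ≤ l)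
    (hlT : ∀ z, l * |⟪v, z⟫| ≤ ‖T z‖) {w : E} (hw : ‖w‖ = 1) :
    rayIntegral s (fun z => l ^ (2 * s) * (⟪v, z⟫ ^ 2 / ‖z‖ ^ 2 * m ‖z‖)) w ≤
      rayIntegral s (fun z => m ‖T z‖) w := by
  have profile_nonneg : 0 ≤ ∫ r in Ioi (0 : ℝ), m r * r ^ (-1 - 2 * s) :=
    setIntegral_nonneg measurableSet_Ioi fun r (hr : 0 < r) =>
      mul_nonneg (hm0 r hr) (Real.rpow_nonneg hr.le _)
  have inner_le : |⟪v, w⟫| ≤ 1 := by simpa [hv, hw] using abs_real_inner_le_norm v w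
  rw [rayIntegral_comp_norm s m T (norm_ne_zero_iff.1 (hw ▸ one_ne_zero))]
  calc rayIntegral s (fun z => l ^ (2 * s) * (⟪v, z⟫ ^ 2 / ‖z‖ ^ 2 * m ‖z‖)) w
      = ⟪v, w⟫ ^ 2 * l ^ (2 * s) * ∫ r in Ioi (0 : ℝ), m r * r ^ (-1 - 2 * s) := by
        rw [rayIntegral, ← integral_const_mul]
        refine setIntegral_congr_fun measurableSet_Ioi fun r (hr : 0 < r) => ?_
        rw [norm_smul, hw, mul_one, Real.norm_of_nonneg hr.le, real_inner_smul_right]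
        field_simp
    _ ≤ ‖T w‖ ^ (2 * s) * ∫ r in Ioi (0 : ℝ), m r * r ^ (-1 - 2 * s) := by
        gcongr
        exact sq_mul_rpow_le_rpow_two_mul hs hs1 hl inner_le (hlT w)

variable [FiniteDimensional ℝ E] [MeasurableSpace E] [BorelSpace E]

theorem integrable_inner_sq_div_mul {g : E → ℝ} (hg : Integrable g) (v : E) :
    Integrable fun z => ⟪v, z⟫ ^ 2 / ‖z‖ ^ 2 * g z := by
  refine hg.bdd_mul (c := ‖v‖ ^ 2) ?_ (.of_forall fun z => ?_)
  · exact (((continuous_const.inner continuous_id).pow 2).measurable.div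
      (measurable_norm.pow_const 2)).aestronglyMeasurable
  · rw [← div_pow, Real.norm_of_nonneg (sq_nonneg _), ← sq_abs, abs_div, abs_norm]
    gcongr
    exact div_le_of_le_mul₀ (norm_nonneg _) (norm_nonneg _) (abs_real_inner_le_norm v z)

theorem integral_inner_sq_div_mul_eq_of_norm_eq (h : ℝ → ℝ) {v w : E} (hvw : ‖v‖ = ‖w‖) :
    ∫ z : E, ⟪v, z⟫ ^ 2 / ‖z‖ ^ 2 * h ‖z‖ = ∫ z : E, ⟪w, z⟫ ^ 2 / ‖z‖ ^ 2 * h ‖z‖ := by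
  set R := (ℝ ∙ (v - w))ᗮ.reflection
  have hR : R v = w := Submodule.reflection_sub hvw
  rw [← R.measurePreserving.integral_comp R.toHomeomorph.measurableEmbedding
    fun z => ⟪w, z⟫ ^ 2 / ‖z‖ ^ 2 * h ‖z‖]
  simp only [← hR, LinearIsometryEquiv.inner_map_map, LinearIsometryEquiv.norm_map]

theorem finrank_mul_integral_inner_sq_div_mul [Nontrivial E] {h : ℝ → ℝ}
    (hh : Integrable fun z : E => h ‖z‖) {v : E} (hv : ‖v‖ = 1) :
    finrank ℝ E * ∫ z : E, ⟪v, z⟫ ^ 2 / ‖z‖ ^ 2 * h ‖z‖ = ∫ z : E, h ‖z‖ := by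
  set b := stdOrthonormalBasis ℝ E
  calc finrank ℝ E * ∫ z : E, ⟪v, z⟫ ^ 2 / ‖z‖ ^ 2 * h ‖z‖
      = ∑ i, ∫ z : E, ⟪b i, z⟫ ^ 2 / ‖z‖ ^ 2 * h ‖z‖ := by
        simp only [Finset.sum_const, Finset.card_univ, Fintype.card_fin, nsmul_eq_mul,
          fun i => integral_inner_sq_div_mul_eq_of_norm_eq h ((b.norm_eq_one i).trans hv.symm)]
    _ = ∫ z : E, ∑ i, ⟪b i, z⟫ ^ 2 / ‖z‖ ^ 2 * h ‖z‖ :=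
        (integral_finsetSum _ fun i _ => integrable_inner_sq_div_mul hh (b i)).symm
    _ = ∫ z : E, h ‖z‖ := by
        refine integral_congr_ae ?_
        filter_upwards [Measure.ae_ne volume (0 : E)] with z hz
        have parseval := b.sum_sq_norm_inner_right z
        simp only [Real.norm_eq_abs, sq_abs] at parseval
        rw [← Finset.sum_mul, ← Finset.sum_div, parseval, div_self (by simpa using hz), one_mul]

theorem radialKernelIntegral_symm (s : ℝ) (m : ℝ → ℝ) (T : E ≃ₗ[ℝ] E)
    (hT : |LinearMap.det (T : E →ₗ[ℝ] E)| = 1) :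
    radialKernelIntegral s m volume T.symm =
      ∫ z, m ‖T z‖ * anisotropicKernel s (LinearEquiv.refl ℝ E) z := by
  rw [radialKernelIntegral, ← (measurePreserving_of_abs_det_eq_one volume T hT).integral_comp
    T.toContinuousLinearEquiv.toHomeomorph.measurableEmbedding]
  simp [anisotropicKernel]

variable [Nontrivial E]

theorem integrable_radial_comp_mul_anisotropicKernel_refl {s : ℝ} (hs : 0 < s) {m : ℝ → ℝ}
    (hm : IntegrableOn (fun r => m r * r ^ (-1 - 2 * s)) (Ioi 0)) (T : E ≃ₗ[ℝ] E)
    (hT : |LinearMap.det (T : E →ₗ[ℝ] E)| = 1) :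
    Integrable fun z => m ‖T z‖ * anisotropicKernel s (LinearEquiv.refl ℝ E) z := by
  have transported := ((measurePreserving_of_abs_det_eq_one volume T hT).integrable_comp_emb
    T.toContinuousLinearEquiv.toHomeomorph.measurableEmbedding).2
    (integrable_radial_mul_anisotropicKernel volume hs hm T.symm)
  simpa [Function.comp_def, anisotropicKernel] using transported

/-- After the change of variables `y = T z`, compare with the weight `⟪v, z⟫ ^ 2 / ‖z‖ ^ 2`, whose
spherical mean is the inverse of the dimension. -/
theorem rpow_mul_radialKernelIntegral_le {s : ℝ} (hs : 0 < s) (hs1 : s ≤ 1) {m : ℝ → ℝ}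
    (hm0 : ∀ r, 0 < r → 0 ≤ m r)
    (hm : IntegrableOn (fun r => m r * r ^ (-1 - 2 * s)) (Ioi 0)) (T : E ≃ₗ[ℝ] E)
    (hT : |LinearMap.det (T : E →ₗ[ℝ] E)| = 1) {v : E} (hv : ‖v‖ = 1) {l : ℝ} (hl : 0 ≤ l)
    (hlT : ∀ z, l * |⟪v, z⟫| ≤ ‖T z‖) :
    l ^ (2 * s) * radialKernelIntegral s m volume (LinearEquiv.refl ℝ E) ≤
      finrank ℝ E * radialKernelIntegral s m volume T.symm := by
  have radial : Integrable fun z : E => m ‖z‖ * ‖z‖ ^ (-(finrank ℝ E + 2 * s)) :=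
    integrable_radial_mul_anisotropicKernel volume hs hm (LinearEquiv.refl ℝ E)
  have mean : radialKernelIntegral s m volume (LinearEquiv.refl ℝ E) = _ :=
    (finrank_mul_integral_inner_sq_div_mul
      (h := fun r => m r * r ^ (-(finrank ℝ E + 2 * s))) radial hv).symm
  have weighted := (integrable_inner_sq_div_mul radial v).const_mul (l ^ (2 * s))
  rw [mean, radialKernelIntegral_symm s m T hT, mul_left_comm, ← integral_const_mul]
  refine mul_le_mul_of_nonneg_left ?_ (Nat.cast_nonneg _)
  simp only [← mul_assoc] at weighted ⊢
  refine integral_mul_le_of_rayIntegral_le volume (s := s)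
    (fun w => anisotropicKernel_pos s (LinearEquiv.refl ℝ E))
    (anisotropicKernel_smul s (LinearEquiv.refl ℝ E)) weighted
    (integrable_radial_comp_mul_anisotropicKernel_refl hs hm T hT) fun w hw _ => ?_
  simpa only [mul_assoc] using rayIntegral_inner_sq_div_mul_le hs hs1 hm0 T hv hl hlT hw

end RadialMoments

section AxialKernel

open Set Module

section Slices

variable {V W : Type*} [NormedAddCommGroup V] [InnerProductSpace ℝ V]
  [NormedAddCommGroup W] [InnerProductSpace ℝ W] [FiniteDimensional ℝ W] [MeasurableSpace W]
  [BorelSpace W]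

theorem integral_rpow_norm_div_sq_add_norm_div_sq {s α β : ℝ} (hs : 0 < s) (hα : 0 < α)
    (hβ : 0 < β) {v : V} (hv : v ≠ 0) :
    ∫ w : W, ((‖v‖ / α) ^ 2 + (‖w‖ / β) ^ 2) ^ (-(finrank ℝ V + finrank ℝ W + 2 * s) / 2) =
      β ^ finrank ℝ W * α ^ (finrank ℝ V + 2 * s) *
          bracketIntegral (finrank ℝ W) (finrank ℝ V + finrank ℝ W + 2 * s) *
        anisotropicKernel s (LinearEquiv.refl ℝ V) v := by
  rw [integral_rpow_sq_add_norm_div_sq (lt_add_of_le_of_pos (by simp) (by positivity)) hβ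
    (div_pos (norm_pos_iff.2 hv) hα), anisotropicKernel, LinearEquiv.refl_apply,
    show (finrank ℝ W - (finrank ℝ V + finrank ℝ W + 2 * s) : ℝ) = -(finrank ℝ V + 2 * s) by ring,
    Real.div_rpow (norm_nonneg _) hα.le, Real.rpow_neg hα.le, div_inv_eq_mul]
  ring

variable [FiniteDimensional ℝ V] [MeasurableSpace V] [BorelSpace V] [Nontrivial V]
  {s α β : ℝ} {q : ℝ → ℝ}

theorem finrank_mul_volume_real_ball :
    finrank ℝ V * (volume : Measure V).real (Metric.ball 0 1) = surfOmega (finrank ℝ V) := by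
  have hd : (0 : ℝ) < finrank ℝ V := Nat.cast_pos.2 finrank_pos
  have : 0 < Real.Gamma (finrank ℝ V / 2) := Real.Gamma_pos_of_pos (half_pos hd)
  rw [Measure.real, InnerProductSpace.volume_ball, surfOmega, Real.Gamma_add_one (by positivity),
    ENNReal.ofReal_one, one_pow, one_mul, ENNReal.toReal_ofReal (by positivity),
    Real.sqrt_eq_rpow, ← Real.rpow_natCast, ← Real.rpow_mul Real.pi_pos.le, one_div_mul_eq_div]
  field_simp

theorem radialKernelIntegral_refl (s : ℝ) (q : ℝ → ℝ) :
    radialKernelIntegral s q volume (LinearEquiv.refl ℝ V) =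
      surfOmega (finrank ℝ V) * ∫ r in Ioi (0 : ℝ), q r * r ^ (-1 - 2 * s) := by
  rw [radialKernelIntegral]
  simp only [anisotropicKernel, LinearEquiv.refl_apply]
  rw [integral_fun_norm_addHaar (volume : Measure V)
    (fun r => q r * r ^ (-(finrank ℝ V + 2 * s))), nsmul_eq_mul, smul_eq_mul, ← mul_assoc,
    finrank_mul_volume_real_ball]
  congr 1
  refine setIntegral_congr_fun measurableSet_Ioi fun r (hr : 0 < r) => ?_
  rw [smul_eq_mul, mul_left_comm, ← Real.rpow_natCast, ← Real.rpow_add hr,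
    Nat.cast_pred finrank_pos]
  ring_nf

theorem integrable_radial_fst_mul_rpow (hs : 0 < s) (hα : 0 < α) (hβ : 0 < β)
    (hq : Measurable q) (hqi : IntegrableOn (fun r => q r * r ^ (-1 - 2 * s)) (Ioi 0)) :
    Integrable fun y : V × W => q ‖y.1‖ * ((‖y.1‖ / α) ^ 2 + (‖y.2‖ / β) ^ 2) ^
      (-(finrank ℝ V + finrank ℝ W + 2 * s) / 2) := by
  rw [Measure.volume_eq_prod, integrable_prod_iff (by fun_prop)]
  constructor
  · filter_upwards [Measure.ae_ne volume (0 : V)] with v hv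
    exact (integrable_rpow_sq_add_norm_div_sq (lt_add_of_le_of_pos (by simp) (by positivity)) hβ
      (div_pos (norm_pos_iff.2 hv) hα)).const_mul _
  · refine ((integrable_radial_mul_anisotropicKernel volume hs hqi (LinearEquiv.refl ℝ V)).norm
      |>.const_mul (β ^ finrank ℝ W * α ^ (finrank ℝ V + 2 * s) *
        bracketIntegral (finrank ℝ W) (finrank ℝ V + finrank ℝ W + 2 * s))).congr ?_
    filter_upwards [Measure.ae_ne volume (0 : V)] with v hv
    simp only [norm_mul, Real.norm_of_nonneg (anisotropicKernel_nonneg s _ v),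
      fun w : W => Real.norm_of_nonneg (Real.rpow_nonneg (by positivity :
        0 ≤ (‖v‖ / α) ^ 2 + (‖w‖ / β) ^ 2) (-(finrank ℝ V + finrank ℝ W + 2 * s) / 2))]
    rw [integral_const_mul, integral_rpow_norm_div_sq_add_norm_div_sq hs hα hβ hv]
    ring

theorem integral_radial_fst_mul_rpow (hs : 0 < s) (hα : 0 < α) (hβ : 0 < β)
    (hq : Measurable q) (hqi : IntegrableOn (fun r => q r * r ^ (-1 - 2 * s)) (Ioi 0)) :
    ∫ y : V × W, q ‖y.1‖ * ((‖y.1‖ / α) ^ 2 + (‖y.2‖ / β) ^ 2) ^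
        (-(finrank ℝ V + finrank ℝ W + 2 * s) / 2) =
      β ^ finrank ℝ W * α ^ (finrank ℝ V + 2 * s) *
          bracketIntegral (finrank ℝ W) (finrank ℝ V + finrank ℝ W + 2 * s) *
        (surfOmega (finrank ℝ V) * ∫ r in Ioi (0 : ℝ), q r * r ^ (-1 - 2 * s)) := by
  rw [← radialKernelIntegral_refl, radialKernelIntegral, ← integral_const_mul,
    Measure.volume_eq_prod, integral_prod _ (integrable_radial_fst_mul_rpow hs hα hβ hq hqi)]
  refine integral_congr_ae ?_
  filter_upwards [Measure.ae_ne volume (0 : V)] with v hv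
  rw [integral_const_mul, integral_rpow_norm_div_sq_add_norm_div_sq hs hα hβ hv]
  ring

end Slices

variable {E : Type*} [NormedAddCommGroup E] [InnerProductSpace ℝ E] [FiniteDimensional ℝ E]

theorem anisotropicKernel_eq_of_axial (s : ℝ) (K : Submodule ℝ E) {T : E ≃ₗ[ℝ] E} {α β : ℝ}
    (hα : 0 < α) (hβ : 0 < β)
    (hT : ∀ y, T y = α⁻¹ • K.starProjection y + β⁻¹ • Kᗮ.starProjection y) (y : E) :
    anisotropicKernel s T y = ((‖K.starProjection y‖ / α) ^ 2 + (‖Kᗮ.starProjection y‖ / β) ^ 2) ^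
      (-(finrank ℝ K + finrank ℝ Kᗮ + 2 * s) / 2) := by
  have pythagoras : ‖T y‖ ^ 2 =
      (‖K.starProjection y‖ / α) ^ 2 + (‖Kᗮ.starProjection y‖ / β) ^ 2 := by
    rw [hT, norm_add_sq_real, Submodule.inner_right_of_mem_orthogonal
      (K.smul_mem _ (K.starProjection_apply_mem y)) (Kᗮ.smul_mem _ (Kᗮ.starProjection_apply_mem y)),
      norm_smul, norm_smul, norm_inv, norm_inv, Real.norm_of_nonneg hα.le,
      Real.norm_of_nonneg hβ.le]
    ring
  rw [anisotropicKernel, ← pythagoras, ← Real.rpow_natCast_mul (norm_nonneg _),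
    ← K.finrank_add_finrank_orthogonal]
  push_cast
  ring_nf

variable [MeasurableSpace E] [BorelSpace E]

theorem measurePreserving_measurableEquivProd_zero (K : Submodule ℝ E) :
    MeasurePreserving (K.measurableEquivProd (0 : E)) := by
  simpa only [InnerProductSpace.euclideanHausdorffMeasure_eq_volume] using
    K.measurePreserving_measurableEquivProd (0 : E)

variable {s α β : ℝ} {q : ℝ → ℝ} {K : Submodule ℝ E} [Nontrivial K] {T : E ≃ₗ[ℝ] E}

theorem integrable_radial_starProjection_mul_anisotropicKernel (hs : 0 < s) (hα : 0 < α)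
    (hβ : 0 < β) (hq : Measurable q)
    (hqi : IntegrableOn (fun r => q r * r ^ (-1 - 2 * s)) (Ioi 0))
    (hT : ∀ y, T y = α⁻¹ • K.starProjection y + β⁻¹ • Kᗮ.starProjection y) :
    Integrable fun y => q ‖K.starProjection y‖ * anisotropicKernel s T y := by
  have := ((measurePreserving_measurableEquivProd_zero K).integrable_comp_emb
    (K.measurableEquivProd 0).measurableEmbedding).2
    (integrable_radial_fst_mul_rpow hs hα hβ hq hqi)
  refine this.congr (.of_forall fun y => ?_)
  simp [anisotropicKernel_eq_of_axial s K hα hβ hT]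

theorem integral_radial_starProjection_mul_anisotropicKernel (hs : 0 < s) (hα : 0 < α)
    (hβ : 0 < β) (hq : Measurable q)
    (hqi : IntegrableOn (fun r => q r * r ^ (-1 - 2 * s)) (Ioi 0))
    (hT : ∀ y, T y = α⁻¹ • K.starProjection y + β⁻¹ • Kᗮ.starProjection y) :
    ∫ y, q ‖K.starProjection y‖ * anisotropicKernel s T y =
      β ^ finrank ℝ Kᗮ * α ^ (finrank ℝ K + 2 * s) *
          bracketIntegral (finrank ℝ Kᗮ) (finrank ℝ E + 2 * s) *
        (surfOmega (finrank ℝ K) * ∫ r in Ioi (0 : ℝ), q r * r ^ (-1 - 2 * s)) := by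
  rw [← K.finrank_add_finrank_orthogonal, Nat.cast_add,
    ← integral_radial_fst_mul_rpow hs hα hβ hq hqi,
    ← (measurePreserving_measurableEquivProd_zero K).integral_comp
      (K.measurableEquivProd 0).measurableEmbedding]
  simp [anisotropicKernel_eq_of_axial s K hα hβ hT]

end AxialKernel

section Symmetrization

open Set Module

variable {E : Type*} [NormedAddCommGroup E] [InnerProductSpace ℝ E] [FiniteDimensional ℝ E]
  {s α β : ℝ} {K : Submodule ℝ E} {T : E ≃ₗ[ℝ] E}

theorem reflection_eq_starProjection_sub (K : Submodule ℝ E) (y : E) :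
    K.reflection y = K.starProjection y - Kᗮ.starProjection y := by
  rw [K.reflection_apply, K.starProjection_orthogonal, sub_apply,
    ContinuousLinearMap.id_apply, two_smul]
  abel

theorem anisotropicKernel_reflection (s : ℝ)
    (hT : ∀ y, T y = α⁻¹ • K.starProjection y + β⁻¹ • Kᗮ.starProjection y) (y : E) :
    anisotropicKernel s T (K.reflection y) = anisotropicKernel s T y := by
  have hrefl : T (K.reflection y) = K.reflection (T y) := by
    have hidem : K.starProjection (K.starProjection y) = K.starProjection y :=
      K.starProjection_eq_self_iff.2 (K.starProjection_apply_mem y)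
    simp only [hT, K.reflection_apply, K.starProjection_orthogonal,
      sub_apply, ContinuousLinearMap.id_apply, map_add, map_sub, map_nsmul,
      map_smul, hidem]
    module
  rw [anisotropicKernel, anisotropicKernel, hrefl, LinearIsometryEquiv.norm_map]

variable [MeasurableSpace E] [BorelSpace E] {f : E → ℝ}

theorem integrable_comp_reflection_mul_anisotropicKernel
    (hT : ∀ y, T y = α⁻¹ • K.starProjection y + β⁻¹ • Kᗮ.starProjection y)
    (hf : Integrable fun y => f y * anisotropicKernel s T y) :
    Integrable fun y => f (K.reflection y) * anisotropicKernel s T y := by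
  simpa only [Function.comp_def, anisotropicKernel_reflection s hT] using
    (K.reflection.measurePreserving.integrable_comp_emb
      K.reflection.toHomeomorph.measurableEmbedding).2 hf

theorem integral_comp_reflection_mul_anisotropicKernel (f : E → ℝ)
    (hT : ∀ y, T y = α⁻¹ • K.starProjection y + β⁻¹ • Kᗮ.starProjection y) :
    ∫ y, f (K.reflection y) * anisotropicKernel s T y =
      ∫ y, f y * anisotropicKernel s T y := by
  simpa only [anisotropicKernel_reflection s hT] using
    K.reflection.measurePreserving.integral_comp
      K.reflection.toHomeomorph.measurableEmbedding fun y => f y * anisotropicKernel s T y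

variable [Nontrivial K] [Nontrivial Kᗮ] {q m : ℝ → ℝ}

theorem integral_mul_anisotropicKernel_le_of_axial (hs : 0 < s) (hα : 0 < α) (hβ : 0 < β)
    (hT : ∀ y, T y = α⁻¹ • K.starProjection y + β⁻¹ • Kᗮ.starProjection y)
    (hq : Measurable q) (hqi : IntegrableOn (fun r => q r * r ^ (-1 - 2 * s)) (Ioi 0))
    (hm : Measurable m) (hmi : IntegrableOn (fun r => m r * r ^ (-1 - 2 * s)) (Ioi 0))
    (hf : Integrable fun y => f y * anisotropicKernel s T y)
    (hle : ∀ v ∈ K, ∀ w ∈ Kᗮ, f (v + w) + f (v - w) ≤ 2 * (q ‖v‖ + m ‖w‖)) :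
    ∫ y, f y * anisotropicKernel s T y ≤
      β ^ finrank ℝ Kᗮ * α ^ (finrank ℝ K + 2 * s) *
          bracketIntegral (finrank ℝ Kᗮ) (finrank ℝ E + 2 * s) *
        (surfOmega (finrank ℝ K) * ∫ r in Ioi (0 : ℝ), q r * r ^ (-1 - 2 * s)) +
      α ^ finrank ℝ K * β ^ (finrank ℝ Kᗮ + 2 * s) *
          bracketIntegral (finrank ℝ K) (finrank ℝ E + 2 * s) *
        (surfOmega (finrank ℝ Kᗮ) * ∫ r in Ioi (0 : ℝ), m r * r ^ (-1 - 2 * s)) := by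
  have hT' : ∀ y, T y = β⁻¹ • Kᗮ.starProjection y + α⁻¹ • Kᗮᗮ.starProjection y := fun y => by
    rw [hT, add_comm]
    simp only [Submodule.orthogonal_orthogonal]
  have hfR := integrable_comp_reflection_mul_anisotropicKernel hT hf
  have hqK := integrable_radial_starProjection_mul_anisotropicKernel hs hα hβ hq hqi hT
  have hmK := integrable_radial_starProjection_mul_anisotropicKernel hs hβ hα hm hmi hT'
  have hpointwise (y : E) : f y * anisotropicKernel s T y +
      f (K.reflection y) * anisotropicKernel s T y ≤
        2 * (q ‖K.starProjection y‖ * anisotropicKernel s T y +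
          m ‖Kᗮ.starProjection y‖ * anisotropicKernel s T y) := by
    have := hle _ (K.starProjection_apply_mem y) _ (Kᗮ.starProjection_apply_mem y)
    rw [K.starProjection_add_starProjection_orthogonal, ← reflection_eq_starProjection_sub] at this
    rw [← add_mul, ← add_mul, ← mul_assoc]
    exact mul_le_mul_of_nonneg_right this (anisotropicKernel_nonneg s T y)
  have := integral_mono (hf.add hfR) ((hqK.add hmK).const_mul 2) hpointwise
  simp only [Pi.add_apply] at this
  rw [integral_add hf hfR, integral_comp_reflection_mul_anisotropicKernel f hT,
    integral_const_mul, integral_add hqK hmK,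
    integral_radial_starProjection_mul_anisotropicKernel hs hα hβ hq hqi hT,
    integral_radial_starProjection_mul_anisotropicKernel hs hβ hα hm hmi hT',
    Submodule.orthogonal_orthogonal] at this
  linarith

end Symmetrization

section GrowthMajorant

open Set

/-- The radial bound `min (C r²) (2 L r)` on the second-order increments of a function which is
Lipschitz with constant `L` and semiconcave with constant `C`. -/
noncomputable def growthMajorant (L C r : ℝ) : ℝ := min (C * r ^ 2) (2 * L * r)

theorem measurable_growthMajorant (L C : ℝ) : Measurable (growthMajorant L C) := by
  unfold growthMajorant
  fun_prop

variable {s L C : ℝ}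

theorem mu1_pos (hs : 1 / 2 < s) (hL : 0 < L) (hC : 0 < C) : 0 < mu1 s L C := by
  have : 0 < 2 * s - 1 := by linarith
  unfold mu1
  positivity

theorem growthMajorant_nonneg {r : ℝ} (hL : 0 < L) (hC : 0 < C) (hr : 0 < r) :
    0 ≤ growthMajorant L C r := by
  unfold growthMajorant
  positivity

theorem eqOn_growthMajorant_mul_rpow_Ioc (s : ℝ) (hC : 0 < C) :
    EqOn (fun r => growthMajorant L C r * r ^ (-1 - 2 * s)) (fun r => C * r ^ (1 - 2 * s))
      (Ioc 0 (2 * L / C)) := by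
  rintro r ⟨hr, hrR⟩
  rw [le_div_iff₀ hC] at hrR
  dsimp only
  rw [growthMajorant, min_eq_left (by nlinarith), mul_assoc, ← Real.rpow_natCast,
    ← Real.rpow_add hr]
  push_cast
  ring_nf

theorem eqOn_growthMajorant_mul_rpow_Ioi (s : ℝ) (hL : 0 < L) (hC : 0 < C) :
    EqOn (fun r => growthMajorant L C r * r ^ (-1 - 2 * s)) (fun r => 2 * L * r ^ (-2 * s))
      (Ioi (2 * L / C)) := by
  intro r (hrR : 2 * L / C < r)
  have hr : 0 < r := lt_trans (by positivity) hrR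
  rw [div_lt_iff₀ hC] at hrR
  dsimp only
  rw [growthMajorant, min_eq_right (by nlinarith), show -2 * s = 1 + (-1 - 2 * s) by ring,
    Real.rpow_add hr, Real.rpow_one, mul_assoc]

theorem integrableOn_growthMajorant_Ioc (hs1 : s < 1) (hL : 0 < L) (hC : 0 < C) :
    IntegrableOn (fun r => growthMajorant L C r * r ^ (-1 - 2 * s)) (Ioc 0 (2 * L / C)) := by
  refine IntegrableOn.congr_fun ?_ (eqOn_growthMajorant_mul_rpow_Ioc s hC).symm measurableSet_Ioc
  rw [← intervalIntegrable_iff_integrableOn_Ioc_of_le (by positivity)]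
  exact (intervalIntegral.intervalIntegrable_rpow' (by linarith)).const_mul C

theorem integrableOn_growthMajorant_Ioi_div (hs : 1 / 2 < s) (hL : 0 < L) (hC : 0 < C) :
    IntegrableOn (fun r => growthMajorant L C r * r ^ (-1 - 2 * s)) (Ioi (2 * L / C)) :=
  IntegrableOn.congr_fun
    ((integrableOn_Ioi_rpow_of_lt (by linarith) (by positivity)).const_mul (2 * L))
    (eqOn_growthMajorant_mul_rpow_Ioi s hL hC).symm measurableSet_Ioi

theorem integrableOn_growthMajorant (hs : 1 / 2 < s) (hs1 : s < 1) (hL : 0 < L) (hC : 0 < C) :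
    IntegrableOn (fun r => growthMajorant L C r * r ^ (-1 - 2 * s)) (Ioi 0) := by
  rw [← Ioc_union_Ioi_eq_Ioi (by positivity : 0 ≤ 2 * L / C)]
  exact (integrableOn_growthMajorant_Ioc hs1 hL hC).union
    (integrableOn_growthMajorant_Ioi_div hs hL hC)

theorem mul_mul_rpow_crossover_eq (s : ℝ) (hL : 0 < L) (hC : 0 < C) :
    L * (2 * L / C) ^ (1 - 2 * s) = L ^ (2 - 2 * s) * (C / 2) ^ (2 * s - 1) := by
  rw [show 2 * L / C = L * (C / 2)⁻¹ by field_simp, Real.mul_rpow hL.le (by positivity),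
    Real.inv_rpow (by positivity), ← Real.rpow_neg (by positivity), ← mul_assoc,
    show 2 - 2 * s = 1 + (1 - 2 * s) by ring, Real.rpow_add hL, Real.rpow_one]
  ring_nf

theorem integral_growthMajorant (hs : 1 / 2 < s) (hs1 : s < 1) (hL : 0 < L) (hC : 0 < C) :
    ∫ r in Ioi (0 : ℝ), growthMajorant L C r * r ^ (-1 - 2 * s) = mu1 s L C / (1 - s) := by
  have hR : 0 < 2 * L / C := by positivity
  rw [← Ioc_union_Ioi_eq_Ioi hR.le, setIntegral_union (Ioc_disjoint_Ioi le_rfl) measurableSet_Ioi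
      (integrableOn_growthMajorant_Ioc hs1 hL hC) (integrableOn_growthMajorant_Ioi_div hs hL hC),
    setIntegral_congr_fun measurableSet_Ioc (eqOn_growthMajorant_mul_rpow_Ioc s hC),
    setIntegral_congr_fun measurableSet_Ioi (eqOn_growthMajorant_mul_rpow_Ioi s hL hC),
    integral_const_mul, integral_const_mul, ← intervalIntegral.integral_of_le hR.le,
    integral_rpow (Or.inl (by linarith)), integral_Ioi_rpow_of_lt (by linarith) hR,
    Real.zero_rpow (by linarith), sub_zero, mu1, ← mul_mul_rpow_crossover_eq s hL hC,
    Real.rpow_add_one hR.ne', show -2 * s + 1 = 1 - 2 * s by ring]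
  have : 2 * s - 1 ≠ 0 := by linarith
  have : 1 - s ≠ 0 := by linarith
  have : 1 - 2 * s ≠ 0 := by linarith
  have : 1 - 2 * s + 1 ≠ 0 := by linarith
  field_simp
  ring

end GrowthMajorant

section SecondIncrement

variable {n : ℕ} {L C : ℝ} {u : EuclideanSpace ℝ (Fin n) → ℝ}

theorem delta2_neg (u : EuclideanSpace ℝ (Fin n) → ℝ) (x y : EuclideanSpace ℝ (Fin n)) :
    delta2 u x (-y) = delta2 u x y := by
  rw [delta2, delta2, sub_neg_eq_add, ← sub_eq_add_neg, add_comm (u (x - y))]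

theorem continuous_of_abs_sub_le_mul_norm (hu : ∀ a b, |u a - u b| ≤ L * ‖a - b‖) :
    Continuous u := by
  refine (LipschitzWith.of_dist_le' (K := L) fun a b => ?_).continuous
  rw [Real.dist_eq, dist_eq_norm]
  exact hu a b

theorem delta2_le_growthMajorant (hu : ∀ a b, |u a - u b| ≤ L * ‖a - b‖)
    (hu' : ∀ a b, delta2 u a b ≤ C * ‖b‖ ^ 2) (x y : EuclideanSpace ℝ (Fin n)) :
    delta2 u x y ≤ growthMajorant L C ‖y‖ := by
  have hplus := (abs_le.1 (hu (x + y) x)).2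
  have hminus := (abs_le.1 (hu (x - y) x)).2
  rw [add_sub_cancel_left] at hplus
  rw [sub_sub_cancel_left, norm_neg] at hminus
  refine le_min (hu' x y) ?_
  rw [delta2]
  linarith

theorem delta2_add_add_delta2_sub_le (hu : ∀ a b, |u a - u b| ≤ L * ‖a - b‖)
    (hu' : ∀ a b, delta2 u a b ≤ C * ‖b‖ ^ 2) (x v w : EuclideanSpace ℝ (Fin n)) :
    delta2 u x (v + w) + delta2 u x (v - w) ≤ 2 * (delta2 u x v + growthMajorant L C ‖w‖) := by
  have hplus := delta2_le_growthMajorant hu hu' (x + v) w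
  have hminus := delta2_le_growthMajorant hu hu' (x - v) w
  have parallelogram : delta2 u x (v + w) + delta2 u x (v - w) =
      2 * delta2 u x v + delta2 u (x + v) w + delta2 u (x - v) w := by
    simp only [delta2, ← add_sub_assoc, ← sub_sub, ← add_assoc, sub_add]
    ring
  linarith

end SecondIncrement

section EuclideanMatrix

open Matrix

variable {ι : Type*} [DecidableEq ι]

theorem posSemidef_one_sub_smul_one {θ : ℝ} (hθ : θ ≤ 1) :
    ((1 : Matrix ι ι ℝ) - θ • (1 : Matrix ι ι ℝ)).PosSemidef := by
  simpa only [sub_smul, one_smul] using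
    (PosSemidef.one (n := ι) (R := ℝ)).smul (sub_nonneg.2 hθ)

variable [Fintype ι] {A : Matrix ι ι ℝ}

/-- The automorphism of Euclidean space given by an invertible matrix. -/
noncomputable def euclideanAut (A : Matrix ι ι ℝ) (hA : IsUnit A.det) :
    EuclideanSpace ℝ ι ≃ₗ[ℝ] EuclideanSpace ℝ ι :=
  A.toLinearEquiv (EuclideanSpace.basisFun ι ℝ).toBasis hA

theorem euclideanAut_apply (hA : IsUnit A.det) (y : EuclideanSpace ℝ ι) :
    euclideanAut A hA y = WithLp.toLp 2 (A *ᵥ y.ofLp) :=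
  (LinearMap.congr_fun (DFunLike.congr_fun toEuclideanLin_eq_toLin_orthonormal A) y).symm

theorem euclideanAut_symm_apply (hA : IsUnit A.det) (y : EuclideanSpace ℝ ι) :
    (euclideanAut A hA).symm y = WithLp.toLp 2 (A⁻¹ *ᵥ y.ofLp) :=
  (LinearMap.congr_fun (DFunLike.congr_fun toEuclideanLin_eq_toLin_orthonormal A⁻¹) y).symm

theorem euclideanAut_one_symm (h : IsUnit (1 : Matrix ι ι ℝ).det) :
    (euclideanAut 1 h).symm = LinearEquiv.refl ℝ (EuclideanSpace ℝ ι) := by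
  ext y : 1
  rw [euclideanAut_symm_apply, inv_one, one_mulVec, LinearEquiv.refl_apply]

theorem det_euclideanAut (hA : IsUnit A.det) :
    LinearMap.det (euclideanAut A hA : EuclideanSpace ℝ ι →ₗ[ℝ] EuclideanSpace ℝ ι) = A.det :=
  LinearMap.det_toLin _ A

theorem eigenvalue_mul_abs_inner_le_norm_euclideanAut (hA : A.PosDef) (hA' : IsUnit A.det) (j : ι)
    (z : EuclideanSpace ℝ ι) :
    hA.1.eigenvalues j * |inner ℝ (hA.1.eigenvectorBasis j) z| ≤ ‖euclideanAut A hA' z‖ := by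
  have hinner : inner ℝ (hA.1.eigenvectorBasis j) (euclideanAut A hA' z) =
      hA.1.eigenvalues j * inner ℝ (hA.1.eigenvectorBasis j) z := by
    rw [euclideanAut_apply, EuclideanSpace.inner_eq_star_dotProduct,
      EuclideanSpace.inner_eq_star_dotProduct, star_trivial, dotProduct_comm,
      dotProduct_mulVec, ← mulVec_transpose, ← conjTranspose_eq_transpose_of_trivial, hA.1.eq,
      hA.1.mulVec_eigenvectorBasis, smul_dotProduct, dotProduct_comm, smul_eq_mul]
  calc hA.1.eigenvalues j * |inner ℝ (hA.1.eigenvectorBasis j) z|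
      = |inner ℝ (hA.1.eigenvectorBasis j) (euclideanAut A hA' z)| := by
        rw [hinner, abs_mul, abs_of_pos (hA.eigenvalues_pos j)]
    _ ≤ ‖hA.1.eigenvectorBasis j‖ * ‖euclideanAut A hA' z‖ := abs_real_inner_le_norm _ _
    _ = ‖euclideanAut A hA' z‖ := by rw [OrthonormalBasis.norm_eq_one, one_mul]

theorem exists_eigenvalue_lt_of_not_posSemidef_sub (hA : A.IsHermitian) {θ : ℝ}
    (hθ : ¬(A - θ • (1 : Matrix ι ι ℝ)).PosSemidef) : ∃ i, hA.eigenvalues i < θ := by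
  contrapose! hθ
  have hsub : A - θ • (1 : Matrix ι ι ℝ) =
      (hA.eigenvectorUnitary : Matrix ι ι ℝ) * diagonal (fun i => hA.eigenvalues i - θ) *
        (hA.eigenvectorUnitary : Matrix ι ι ℝ)ᴴ := by
    have hdiag : diagonal (fun i => hA.eigenvalues i - θ) =
        diagonal hA.eigenvalues - θ • (1 : Matrix ι ι ℝ) := by
      rw [smul_one_eq_diagonal, diagonal_sub]
    have hunitary : (hA.eigenvectorUnitary : Matrix ι ι ℝ) *
        (hA.eigenvectorUnitary : Matrix ι ι ℝ)ᴴ = 1 :=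
      Unitary.mul_star_self_of_mem hA.eigenvectorUnitary.2
    rw [hdiag, mul_sub, sub_mul, mul_smul_comm, mul_one, smul_mul_assoc, hunitary]
    exact congrArg (· - θ • (1 : Matrix ι ι ℝ)) hA.spectral_theorem
  rw [hsub]
  exact (posSemidef_diagonal_iff.2 fun i => sub_nonneg.2 (hθ i)).mul_mul_conjTranspose_same _

theorem exists_one_le_mul_eigenvalue_pow (hA : A.PosDef) (hdet : A.det = 1) {θ : ℝ} {i : ι}
    (hi : hA.1.eigenvalues i ≤ θ) :
    ∃ j, 1 ≤ θ * hA.1.eigenvalues j ^ (Fintype.card ι - 1) := by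
  obtain ⟨j, -, hj⟩ := Finset.exists_max_image Finset.univ hA.1.eigenvalues ⟨i, Finset.mem_univ i⟩
  have hnonneg : ∀ k, 0 ≤ hA.1.eigenvalues k := fun k => (hA.eigenvalues_pos k).le
  refine ⟨j, ?_⟩
  calc 1 = ∏ k, hA.1.eigenvalues k := by simpa [hdet] using hA.1.det_eq_prod_eigenvalues
    _ = hA.1.eigenvalues i * ∏ k ∈ Finset.univ.erase i, hA.1.eigenvalues k :=
        (Finset.mul_prod_erase _ _ (Finset.mem_univ i)).symm
    _ ≤ θ * hA.1.eigenvalues j ^ (Finset.univ.erase i).card :=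
        mul_le_mul hi (Finset.prod_const (hA.1.eigenvalues j) ▸ Finset.prod_le_prod
          (fun k _ => hnonneg k) fun k _ => hj k (Finset.mem_univ k))
          (Finset.prod_nonneg fun k _ => hnonneg k) ((hnonneg i).trans hi)
    _ = θ * hA.1.eigenvalues j ^ (Fintype.card ι - 1) := by
        rw [Finset.card_erase_of_mem (Finset.mem_univ i), Finset.card_univ]

end EuclideanMatrix

section AxialMatrix

open Matrix

variable {ι : Type*} {e : EuclideanSpace ℝ ι}

theorem ofLp_dotProduct_self [Fintype ι] (he : ‖e‖ = 1) : e.ofLp ⬝ᵥ e.ofLp = 1 := by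
  have := real_inner_self_eq_norm_sq e
  rwa [EuclideanSpace.inner_eq_star_dotProduct, he, star_trivial, one_pow] at this

variable [DecidableEq ι]

/-- The symmetric matrix acting as `b` on the line through the unit vector `e` and as `a` on its
orthogonal complement. -/
noncomputable def axialMatrix (e : EuclideanSpace ℝ ι) (a b : ℝ) : Matrix ι ι ℝ :=
  a • 1 + (b - a) • vecMulVec e.ofLp e.ofLp

theorem isHermitian_axialMatrix (e : EuclideanSpace ℝ ι) (a b : ℝ) :
    (axialMatrix e a b).IsHermitian := by
  rw [axialMatrix, Matrix.IsHermitian, conjTranspose_eq_transpose_of_trivial]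
  simp [transpose_vecMulVec]

variable [Fintype ι]

theorem axialMatrix_mul_axialMatrix (he : ‖e‖ = 1) (a b a' b' : ℝ) :
    axialMatrix e a b * axialMatrix e a' b' = axialMatrix e (a * a') (b * b') := by
  have hP : vecMulVec e.ofLp e.ofLp * vecMulVec e.ofLp e.ofLp = vecMulVec e.ofLp e.ofLp := by
    rw [vecMulVec_mul_vecMulVec, ofLp_dotProduct_self he, one_smul]
  simp only [axialMatrix, add_mul, mul_add, smul_mul_smul_comm, mul_one, one_mul, hP]
  module

theorem axialMatrix_inv (he : ‖e‖ = 1) {a b : ℝ} (ha : a ≠ 0) (hb : b ≠ 0) :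
    (axialMatrix e a b)⁻¹ = axialMatrix e a⁻¹ b⁻¹ := by
  refine inv_eq_right_inv ?_
  rw [axialMatrix_mul_axialMatrix he, mul_inv_cancel₀ ha, mul_inv_cancel₀ hb, axialMatrix]
  module

theorem det_axialMatrix (he : ‖e‖ = 1) {a : ℝ} (ha : a ≠ 0) (b : ℝ) :
    (axialMatrix e a b).det = a ^ (Fintype.card ι - 1) * b := by
  have : axialMatrix e a b =
      a • (1 + replicateCol Unit (((b - a) / a) • e.ofLp) * replicateRow Unit e.ofLp) := by
    rw [← vecMulVec_eq, axialMatrix, smul_vecMulVec, smul_add, smul_smul, mul_div_cancel₀ _ ha]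
  have hι : Nonempty ι := by
    by_contra! hempty
    simp [Subsingleton.elim e 0] at he
  rw [this, det_smul, det_one_add_replicateCol_mul_replicateRow, dotProduct_smul,
    ofLp_dotProduct_self he, ← pow_sub_one_mul Fintype.card_ne_zero, smul_eq_mul, mul_one,
    mul_assoc, mul_add, mul_div_cancel₀ _ ha, mul_one, add_sub_cancel]

theorem posDef_axialMatrix (he : ‖e‖ = 1) {a b : ℝ} (ha : 0 < a) (hb : 0 < b) :
    (axialMatrix e a b).PosDef := by
  have hsq : (axialMatrix e √a √b)ᴴ * axialMatrix e √a √b = axialMatrix e a b := by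
    rw [(isHermitian_axialMatrix e √a √b).eq, axialMatrix_mul_axialMatrix he,
      Real.mul_self_sqrt ha.le, Real.mul_self_sqrt hb.le]
  rw [← hsq]
  refine PosDef.conjTranspose_mul_self _ (mulVec_injective_of_isUnit ?_)
  rw [isUnit_iff_isUnit_det, det_axialMatrix he (by positivity)]
  exact (by positivity : √a ^ (Fintype.card ι - 1) * √b ≠ 0).isUnit

theorem axialMatrix_mulVec_eq_starProjection (he : ‖e‖ = 1) (a b : ℝ) (y : EuclideanSpace ℝ ι) :
    WithLp.toLp 2 (axialMatrix e a b *ᵥ y.ofLp) =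
      b • (Submodule.span ℝ {e}).starProjection y +
        a • (Submodule.span ℝ {e})ᗮ.starProjection y := by
  rw [Submodule.starProjection_orthogonal, _root_.sub_apply, ContinuousLinearMap.id_apply,
    Submodule.starProjection_unit_singleton ℝ he, axialMatrix, add_mulVec, smul_mulVec,
    smul_mulVec, one_mulVec, vecMulVec_mulVec, EuclideanSpace.inner_eq_star_dotProduct,
    star_trivial, dotProduct_comm]
  ext i
  simp only [PiLp.add_apply, PiLp.sub_apply, PiLp.smul_apply, Pi.add_apply, Pi.smul_apply,
    MulOpposite.smul_eq_mul_unop, MulOpposite.unop_op, smul_eq_mul]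
  ring

theorem euclideanAut_axialMatrix_symm_apply (he : ‖e‖ = 1) {a b : ℝ} (ha : a ≠ 0) (hb : b ≠ 0)
    (hunit : IsUnit (axialMatrix e a b).det) (y : EuclideanSpace ℝ ι) :
    (euclideanAut (axialMatrix e a b) hunit).symm y =
      b⁻¹ • (Submodule.span ℝ {e}).starProjection y +
        a⁻¹ • (Submodule.span ℝ {e})ᗮ.starProjection y := by
  rw [euclideanAut_symm_apply, axialMatrix_inv he ha hb, axialMatrix_mulVec_eq_starProjection he]

end AxialMatrix

section Constants

variable {n : ℕ} {s L C η₀ : ℝ}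

theorem surfOmega_pos {k : ℕ} (hk : 0 < k) : 0 < surfOmega k := by
  have : 0 < Real.Gamma ((k : ℝ) / 2) := Real.Gamma_pos_of_pos (by positivity)
  unfold surfOmega
  positivity

theorem surfOmega_one : surfOmega 1 = 2 := by
  rw [surfOmega, Nat.cast_one, Real.Gamma_one_half_eq, ← Real.sqrt_eq_rpow,
    mul_div_cancel_right₀ _ (by positivity)]

theorem bracketIntegral_pos {d : ℕ} {p : ℝ} (hp : d < p) : 0 < bracketIntegral d p := by
  have : 0 < Real.Gamma ((p - d) / 2) := Real.Gamma_pos_of_pos (half_pos (sub_pos.2 hp))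
  have : 0 < Real.Gamma (p / 2) :=
    Real.Gamma_pos_of_pos (half_pos (d.cast_nonneg.trans_lt hp))
  unfold bracketIntegral
  positivity

theorem C1_eq_bracketIntegral (n : ℕ) (s L C : ℝ) :
    C1 n s L C = bracketIntegral 1 (n + 2 * s) * (mu1 s L C * surfOmega (n - 1) / 2) := by
  rw [C1, bracketIntegral, Real.sqrt_eq_rpow, Nat.cast_one]
  ring_nf

theorem C2_eq_bracketIntegral (hn : 2 ≤ n) (s : ℝ) :
    C2 n s = bracketIntegral (n - 1) (n + 2 * s) := by
  have hn' : (0 : ℝ) < n - 1 := by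
    have : (2 : ℝ) ≤ n := mod_cast hn
    linarith
  have : Real.Gamma (((n : ℝ) - 1) / 2) ≠ 0 := (Real.Gamma_pos_of_pos (by positivity)).ne'
  rw [C2, surfOmega, bracketIntegral, Nat.cast_pred (by lia)]
  field_simp
  ring_nf

theorem C1_pos (hn : 2 ≤ n) (hs : 1 / 2 < s) (hL : 0 < L) (hC : 0 < C) : 0 < C1 n s L C := by
  have hn' : (2 : ℝ) ≤ n := mod_cast hn
  rw [C1_eq_bracketIntegral]
  exact mul_pos (bracketIntegral_pos (by push_cast; linarith))
    (half_pos (mul_pos (mu1_pos hs hL hC) (surfOmega_pos (by lia))))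

theorem C2_pos (hn : 2 ≤ n) (hs : 0 < s) : 0 < C2 n s := by
  rw [C2_eq_bracketIntegral hn]
  exact bracketIntegral_pos (by rw [Nat.cast_pred (by lia)]; linarith)

theorem mu0_pos (hn : 2 ≤ n) (hs : 1 / 2 < s) (hL : 0 < L) (hC : 0 < C) (hη : 0 < η₀) :
    0 < mu0 n s L C η₀ := by
  have := C1_pos hn hs hL hC
  have := C2_pos hn (by linarith : 0 < s)
  unfold mu0
  positivity

/- The choice `c₁ a ^ (2 s) = η / 2` leaves `η / 2 ≤ c₂ b ^ (2 s) H`, and `b` is then determined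
by the constraint. -/
theorem rpow_mul_inv_mul_rpow_le_of_forall_le {c₁ c₂ η H : ℝ} (hn : 1 ≤ n) (hs : 0 < s)
    (hc₁ : 0 < c₁) (hc₂ : 0 < c₂) (hη : 0 < η)
    (hle : ∀ a b : ℝ, 0 < a → 0 < b → a ^ (n - 1) * b = 1 →
      η ≤ c₁ * a ^ (2 * s) + c₂ * b ^ (2 * s) * H) :
    c₁ ^ (1 - (n : ℝ)) * c₂⁻¹ * (η / 2) ^ (n : ℝ) ≤ H := by
  obtain ⟨k, rfl⟩ : ∃ k, n = k + 1 := ⟨n - 1, by lia⟩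
  set w := η / 2 / c₁ with hw
  have hw₀ : 0 < w := by positivity
  set a := w ^ (1 / (2 * s)) with ha
  have ha₀ : 0 < a := by positivity
  have has : a ^ (2 * s) = w := by
    rw [ha, ← Real.rpow_mul hw₀.le, one_div_mul_cancel (by positivity), Real.rpow_one]
  have hbs : (a ^ k)⁻¹ ^ (2 * s) = (w ^ k)⁻¹ := by
    rw [Real.inv_rpow (by positivity), ← Real.rpow_pow_comm ha₀.le, has]
  have hhalf : η / 2 ≤ c₂ * (w ^ k)⁻¹ * H := by
    have := hle a (a ^ k)⁻¹ ha₀ (by positivity) (mul_inv_cancel₀ (by positivity))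
    rw [has, hbs, hw, mul_div_cancel₀ _ hc₁.ne'] at this
    linarith
  calc c₁ ^ (1 - ((k + 1 : ℕ) : ℝ)) * c₂⁻¹ * (η / 2) ^ ((k + 1 : ℕ) : ℝ)
      = η / 2 * (w ^ k / c₂) := by
        rw [Real.rpow_natCast, Nat.cast_add_one, sub_add_cancel_right, Real.rpow_neg hc₁.le,
          Real.rpow_natCast, hw, div_pow (η / 2) c₁, pow_succ]
        field_simp
    _ ≤ c₂ * (w ^ k)⁻¹ * H * (w ^ k / c₂) := by gcongr
    _ = H := by field_simp

end Constants

section EllipticityBound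

open Set Module

variable {n : ℕ} {s L C η₀ : ℝ} {u : EuclideanSpace ℝ (Fin n) → ℝ} {x : EuclideanSpace ℝ (Fin n)}
  {A : Matrix (Fin n) (Fin n) ℝ}

/-- The ellipticity bound `η₀` of `u` at `x`: every `L_A u(x)` with `A` positive definite of
determinant one is an absolutely convergent integral, and `η₀ ≤ (1 - s) L_A u(x)`. -/
def HasEllipticityBound (s η₀ : ℝ) (u : EuclideanSpace ℝ (Fin n) → ℝ)
    (x : EuclideanSpace ℝ (Fin n)) : Prop :=
  ∀ A : Matrix (Fin n) (Fin n) ℝ, A.PosDef → A.det = 1 →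
    Integrable (fun y => kernelA s A u x y) ∧ η₀ ≤ (1 - s) * LA s A u x

theorem kernelA_eq_delta2_mul_anisotropicKernel (hA : IsUnit A.det)
    (y : EuclideanSpace ℝ (Fin n)) :
    kernelA s A u x y = delta2 u x y * anisotropicKernel s (euclideanAut A hA).symm y := by
  rw [kernelA, anisotropicKernel, Real.rpow_neg (norm_nonneg _), ← div_eq_mul_inv,
    euclideanAut_symm_apply, finrank_euclideanSpace_fin]
  rfl

theorem delta2_norm_smul_of_mem_span_singleton {e v : EuclideanSpace ℝ (Fin n)} (he : ‖e‖ = 1)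
    (hv : v ∈ Submodule.span ℝ {e}) : delta2 u x (‖v‖ • e) = delta2 u x v := by
  obtain ⟨c, rfl⟩ := Submodule.mem_span_singleton.1 hv
  rw [norm_smul, he, mul_one, Real.norm_eq_abs]
  rcases abs_choice c with h | h <;> rw [h]
  rw [neg_smul, delta2_neg]

theorem pow_mul_rpow_of_pow_mul_eq_one {a b : ℝ} (k : ℕ) (s : ℝ) (hb : 0 < b)
    (hab : a ^ k * b = 1) : a ^ k * b ^ (1 + 2 * s) = b ^ (2 * s) := by
  rw [Real.rpow_add hb, Real.rpow_one, ← mul_assoc, hab, one_mul]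

theorem mul_rpow_of_pow_mul_eq_one {a b : ℝ} (k : ℕ) (s : ℝ) (ha : 0 < a)
    (hab : a ^ k * b = 1) : b * a ^ (k + 2 * s) = a ^ (2 * s) := by
  rw [Real.rpow_add ha, Real.rpow_natCast, ← mul_assoc, mul_comm b, hab, one_mul]

theorem LA_axialMatrix_le (hn : 2 ≤ n) (hs : 1 / 2 < s) (hs1 : s < 1) (hL : 0 < L) (hC : 0 < C)
    (hu : ∀ a b, |u a - u b| ≤ L * ‖a - b‖) (hu' : ∀ a b, delta2 u a b ≤ C * ‖b‖ ^ 2)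
    {e : EuclideanSpace ℝ (Fin n)} (he : ‖e‖ = 1) {a b : ℝ} (ha : 0 < a) (hb : 0 < b)
    (hab : a ^ (n - 1) * b = 1)
    (hint : Integrable fun y => kernelA s (axialMatrix e a b) u x y)
    (hray : IntegrableOn (fun r : ℝ => delta2 u x (r • e) * r ^ (-1 - 2 * s)) (Ioi 0)) :
    (1 - s) * LA s (axialMatrix e a b) u x ≤
      C1 n s L C * a ^ (2 * s) +
        C2 n s * b ^ (2 * s) * ((1 - s) * rayIntegral s (delta2 u x) e) := by
  have he₀ : e ≠ 0 := norm_ne_zero_iff.1 (he ▸ one_ne_zero)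
  have : Fact (finrank ℝ (EuclideanSpace ℝ (Fin n)) = n - 1 + 1) :=
    ⟨by rw [finrank_euclideanSpace_fin]; lia⟩
  have hspan : finrank ℝ (Submodule.span ℝ {e}) = 1 := finrank_span_singleton he₀
  have horth : finrank ℝ (Submodule.span ℝ {e})ᗮ = n - 1 :=
    Submodule.finrank_orthogonal_span_singleton he₀
  have : Nontrivial (Submodule.span ℝ {e}) :=
    nontrivial_of_finrank_pos (R := ℝ) (by rw [hspan]; exact one_pos)
  have : Nontrivial (Submodule.span ℝ {e})ᗮ :=
    nontrivial_of_finrank_pos (R := ℝ) (by rw [horth]; lia)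
  have hunit : IsUnit (axialMatrix e a b).det := by
    rw [det_axialMatrix he ha.ne', Fintype.card_fin, hab]
    exact isUnit_one
  have hcont := continuous_of_abs_sub_le_mul_norm hu
  simp only [LA, kernelA_eq_delta2_mul_anisotropicKernel hunit] at hint ⊢
  have hle := integral_mul_anisotropicKernel_le_of_axial (by linarith) hb ha
    (euclideanAut_axialMatrix_symm_apply he ha.ne' hb.ne' hunit)
    (by unfold delta2; fun_prop) hray (measurable_growthMajorant L C)
    (integrableOn_growthMajorant hs hs1 hL hC) hint fun v hv w _ => by
      rw [delta2_norm_smul_of_mem_span_singleton he hv]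
      exact delta2_add_add_delta2_sub_le hu hu' x v w
  rw [hspan, horth, finrank_euclideanSpace_fin, surfOmega_one, Nat.cast_one, pow_one,
    pow_mul_rpow_of_pow_mul_eq_one (n - 1) s hb hab, mul_rpow_of_pow_mul_eq_one (n - 1) s ha hab,
    integral_growthMajorant hs hs1 hL hC, ← C2_eq_bracketIntegral hn] at hle
  have h1s : 0 < 1 - s := by linarith
  refine (mul_le_mul_of_nonneg_left (mul_le_mul_of_nonneg_left hle one_half_pos.le)
    h1s.le).trans_eq ?_
  rw [C1_eq_bracketIntegral, rayIntegral]
  field_simp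
  ring

theorem mu0_le_rayIntegral (hn : 2 ≤ n) (hs : 1 / 2 < s) (hs1 : s < 1) (hL : 0 < L) (hC : 0 < C)
    (hη : 0 < η₀) (hu : ∀ a b, |u a - u b| ≤ L * ‖a - b‖)
    (hu' : ∀ a b, delta2 u a b ≤ C * ‖b‖ ^ 2) (hell : HasEllipticityBound s η₀ u x)
    {e : EuclideanSpace ℝ (Fin n)} (he : ‖e‖ = 1)
    (hray : IntegrableOn (fun r : ℝ => delta2 u x (r • e) * r ^ (-1 - 2 * s)) (Ioi 0)) :
    mu0 n s L C η₀ ≤ (1 - s) * rayIntegral s (delta2 u x) e := by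
  refine rpow_mul_inv_mul_rpow_le_of_forall_le (s := s) (by lia) (by linarith) (C1_pos hn hs hL hC)
    (C2_pos hn (by linarith)) hη fun a b ha hb hab => ?_
  have hdet : (axialMatrix e a b).det = 1 := by
    rw [det_axialMatrix he ha.ne', Fintype.card_fin, hab]
  obtain ⟨hint, hle⟩ := hell _ (posDef_axialMatrix he ha hb) hdet
  exact hle.trans (LA_axialMatrix_le hn hs hs1 hL hC hu hu' he ha hb hab hint hray)

theorem mu0_div_mu1_mul_radialKernelIntegral_le (hn : 2 ≤ n) (hs : 1 / 2 < s) (hs1 : s < 1)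
    (hL : 0 < L) (hC : 0 < C) (hη : 0 < η₀) (hu : ∀ a b, |u a - u b| ≤ L * ‖a - b‖)
    (hu' : ∀ a b, delta2 u a b ≤ C * ‖b‖ ^ 2) (hell : HasEllipticityBound s η₀ u x)
    (hA : A.PosDef) (hdet : A.det = 1) :
    mu0 n s L C η₀ / mu1 s L C *
        radialKernelIntegral s (growthMajorant L C) volume
          (euclideanAut A (hdet ▸ isUnit_one)).symm ≤
      2 * LA s A u x := by
  have : NeZero n := ⟨by lia⟩
  have hint := (hell A hA hdet).1
  have hunit : IsUnit A.det := hdet ▸ isUnit_one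
  rw [LA, ← mul_assoc, mul_one_div_cancel two_ne_zero, one_mul]
  simp only [kernelA_eq_delta2_mul_anisotropicKernel hunit] at hint ⊢
  refine mul_radialKernelIntegral_le volume (by linarith) (integrableOn_growthMajorant hs hs1 hL hC)
    _ hint fun e he hray => ?_
  have h1s : 0 < 1 - s := by linarith
  rw [integral_growthMajorant hs hs1 hL hC, div_mul_div_cancel₀ (mu1_pos hs hL hC).ne',
    div_le_iff₀' h1s]
  exact mu0_le_rayIntegral hn hs hs1 hL hC hη hu hu' hell he hray

end EllipticityBound

section SmallEigenvalue

open Module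

variable {n : ℕ} {s L C η₀ θ : ℝ} {u : EuclideanSpace ℝ (Fin n) → ℝ}
  {x : EuclideanSpace ℝ (Fin n)} {A : Matrix (Fin n) (Fin n) ℝ}

theorem LA_pos_of_hasEllipticityBound (hs1 : s < 1) (hη : 0 < η₀)
    (hell : HasEllipticityBound s η₀ u x) (hA : A.PosDef) (hdet : A.det = 1) : 0 < LA s A u x :=
  pos_of_mul_pos_right (hη.trans_le (hell A hA hdet).2) (sub_pos.2 hs1).le

theorem two_mul_LA_one_le_radialKernelIntegral_refl (hn : 1 ≤ n) (hs : 1 / 2 < s) (hs1 : s < 1)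
    (hL : 0 < L) (hC : 0 < C) (hu : ∀ a b, |u a - u b| ≤ L * ‖a - b‖)
    (hu' : ∀ a b, delta2 u a b ≤ C * ‖b‖ ^ 2)
    (hint : Integrable fun y => kernelA s 1 u x y) :
    2 * LA s 1 u x ≤ radialKernelIntegral s (growthMajorant L C) volume
      (LinearEquiv.refl ℝ (EuclideanSpace ℝ (Fin n))) := by
  have : NeZero n := ⟨by lia⟩
  have hunit : IsUnit (1 : Matrix (Fin n) (Fin n) ℝ).det := by
    rw [Matrix.det_one]
    exact isUnit_one
  rw [LA, ← mul_assoc, mul_one_div_cancel two_ne_zero, one_mul]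
  simp only [kernelA_eq_delta2_mul_anisotropicKernel hunit, euclideanAut_one_symm] at hint ⊢
  exact integral_mono hint (integrable_radial_mul_anisotropicKernel volume (by linarith)
    (integrableOn_growthMajorant hs hs1 hL hC) _) fun y =>
      mul_le_mul_of_nonneg_right (delta2_le_growthMajorant hu hu' x y)
        (anisotropicKernel_nonneg _ _ _)

theorem mu0_le_mu1 (hn : 2 ≤ n) (hs : 1 / 2 < s) (hs1 : s < 1) (hL : 0 < L) (hC : 0 < C)
    (hη : 0 < η₀) (hu : ∀ a b, |u a - u b| ≤ L * ‖a - b‖)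
    (hu' : ∀ a b, delta2 u a b ≤ C * ‖b‖ ^ 2) (hell : HasEllipticityBound s η₀ u x) :
    mu0 n s L C η₀ ≤ mu1 s L C := by
  have hpos := LA_pos_of_hasEllipticityBound hs1 hη hell .one Matrix.det_one
  have hupper := two_mul_LA_one_le_radialKernelIntegral_refl (by lia) hs hs1 hL hC hu hu'
    (hell 1 .one Matrix.det_one).1
  have hlower := mu0_div_mu1_mul_radialKernelIntegral_le hn hs hs1 hL hC hη hu hu' hell .one
    Matrix.det_one
  rw [euclideanAut_one_symm] at hlower
  rw [← div_le_one (mu1_pos hs hL hC)]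
  exact le_of_mul_le_mul_right ((hlower.trans hupper).trans_eq (one_mul _).symm)
    ((mul_pos two_pos hpos).trans_le hupper)

theorem mu0_div_mul_mu1_rpow_le_one (hn : 2 ≤ n) (hs : 1 / 2 < s) (hs1 : s < 1) (hL : 0 < L)
    (hC : 0 < C) (hη : 0 < η₀) (hu : ∀ a b, |u a - u b| ≤ L * ‖a - b‖)
    (hu' : ∀ a b, delta2 u a b ≤ C * ‖b‖ ^ 2) (hell : HasEllipticityBound s η₀ u x) :
    (mu0 n s L C η₀ / (n * mu1 s L C)) ^ (((n : ℝ) - 1) / (2 * s)) ≤ 1 := by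
  have hμ₀ := mu0_pos hn hs hL hC hη
  have hμ₁ := mu1_pos hs hL hC
  have hn' : (1 : ℝ) ≤ n := mod_cast one_le_two.trans hn
  have hρ : mu0 n s L C η₀ / (n * mu1 s L C) ≤ 1 :=
    div_le_one_of_le₀ ((mu0_le_mu1 hn hs hs1 hL hC hη hu hu' hell).trans
      (le_mul_of_one_le_left hμ₁.le hn')) (by positivity)
  exact Real.rpow_le_one (by positivity) hρ (div_nonneg (sub_nonneg.2 hn') (by linarith))

theorem one_le_mul_rpow_of_one_le_mul_pow {ρ l : ℝ} (hn : 2 ≤ n) (hs : 0 < s) (hρ : 0 ≤ ρ)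
    (hl : 0 ≤ l) (hθ : θ ≤ ρ ^ (((n : ℝ) - 1) / (2 * s))) (hle : 1 ≤ θ * l ^ (n - 1)) :
    1 ≤ ρ * l ^ (2 * s) := by
  have hn' : (0 : ℝ) < n - 1 := by
    have : (2 : ℝ) ≤ n := mod_cast hn
    linarith
  have hone : 1 ≤ ρ ^ (((n : ℝ) - 1) / (2 * s)) * l ^ (n - 1) := hle.trans (by gcongr)
  calc (1 : ℝ) ≤ (ρ ^ (((n : ℝ) - 1) / (2 * s)) * l ^ (n - 1)) ^ (2 * s / ((n : ℝ) - 1)) :=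
        Real.one_le_rpow hone (by positivity)
    _ = ρ * l ^ (2 * s) := by
        rw [Real.mul_rpow (by positivity) (by positivity), ← Real.rpow_mul hρ,
          ← Real.rpow_natCast, ← Real.rpow_mul hl, Nat.cast_pred (by lia),
          div_mul_div_cancel₀ (by positivity), div_self hn'.ne', Real.rpow_one,
          mul_div_cancel₀ _ hn'.ne']

theorem eigenvalue_rpow_mul_radialKernelIntegral_le (hs : 1 / 2 < s) (hs1 : s < 1) (hL : 0 < L)
    (hC : 0 < C) (hA : A.PosDef) (hdet : A.det = 1) (j : Fin n) :
    hA.1.eigenvalues j ^ (2 * s) * radialKernelIntegral s (growthMajorant L C) volume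
        (LinearEquiv.refl ℝ (EuclideanSpace ℝ (Fin n))) ≤
      n * radialKernelIntegral s (growthMajorant L C) volume
        (euclideanAut A (hdet ▸ isUnit_one)).symm := by
  have : NeZero n := j.neZero
  have hunit : IsUnit A.det := hdet ▸ isUnit_one
  have hmoment := rpow_mul_radialKernelIntegral_le (by linarith) hs1.le
    (fun r => growthMajorant_nonneg hL hC) (integrableOn_growthMajorant hs hs1 hL hC)
    (euclideanAut A hunit) (by rw [det_euclideanAut, hdet, abs_one])
    (hA.1.eigenvectorBasis.norm_eq_one j) (hA.eigenvalues_pos j).le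
    (eigenvalue_mul_abs_inner_le_norm_euclideanAut hA hunit j)
  rwa [finrank_euclideanSpace_fin] at hmoment

theorem LA_one_le_LA_of_not_posSemidef_sub (hn : 2 ≤ n) (hs : 1 / 2 < s) (hs1 : s < 1)
    (hL : 0 < L) (hC : 0 < C) (hη : 0 < η₀) (hu : ∀ a b, |u a - u b| ≤ L * ‖a - b‖)
    (hu' : ∀ a b, delta2 u a b ≤ C * ‖b‖ ^ 2) (hell : HasEllipticityBound s η₀ u x)
    (hθ : θ ≤ (mu0 n s L C η₀ / (n * mu1 s L C)) ^ (((n : ℝ) - 1) / (2 * s)))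
    (hA : A.PosDef) (hdet : A.det = 1)
    (hAθ : ¬(A - θ • (1 : Matrix (Fin n) (Fin n) ℝ)).PosSemidef) :
    LA s 1 u x ≤ LA s A u x := by
  set R := radialKernelIntegral s (growthMajorant L C) volume
    (LinearEquiv.refl ℝ (EuclideanSpace ℝ (Fin n)))
  set ρ := mu0 n s L C η₀ / (n * mu1 s L C) with hρ
  have hμ₀ := mu0_pos hn hs hL hC hη
  have hμ₁ := mu1_pos hs hL hC
  set Q := radialKernelIntegral s (growthMajorant L C) volume
    (euclideanAut A (hdet ▸ isUnit_one)).symm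
  have hupper : 2 * LA s 1 u x ≤ R := two_mul_LA_one_le_radialKernelIntegral_refl (by lia) hs hs1
    hL hC hu hu' (hell 1 .one Matrix.det_one).1
  have hR : 0 ≤ R := (mul_pos two_pos
    (LA_pos_of_hasEllipticityBound hs1 hη hell .one Matrix.det_one)).le.trans hupper
  obtain ⟨i, hi⟩ := exists_eigenvalue_lt_of_not_posSemidef_sub hA.1 hAθ
  obtain ⟨j, hj⟩ := exists_one_le_mul_eigenvalue_pow hA hdet hi.le
  rw [Fintype.card_fin] at hj
  refine le_of_mul_le_mul_left ?_ two_pos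
  calc 2 * LA s 1 u x ≤ R := hupper
    _ ≤ ρ * hA.1.eigenvalues j ^ (2 * s) * R :=
        le_mul_of_one_le_left hR (one_le_mul_rpow_of_one_le_mul_pow hn (by linarith)
          (by positivity) (hA.eigenvalues_pos j).le hθ hj)
    _ ≤ ρ * (n * Q) := by
        rw [mul_assoc]
        exact mul_le_mul_of_nonneg_left
          (eigenvalue_rpow_mul_radialKernelIntegral_le hs hs1 hL hC hA hdet j) (by positivity)
    _ = mu0 n s L C η₀ / mu1 s L C * Q := by
        rw [hρ]
        field_simp
    _ ≤ 2 * LA s A u x :=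
        mu0_div_mu1_mul_radialKernelIntegral_le hn hs hs1 hL hC hη hu hu' hell hA hdet

end SmallEigenvalue

theorem stmt0 (n : ℕ) (hn : 2 ≤ n) (s L C η₀ : ℝ)
    (hs : 1 / 2 < s) (hs1 : s < 1) (hL : 0 < L) (hC : 0 < C) (hη : 0 < η₀)
    (u : EuclideanSpace ℝ (Fin n) → ℝ)
    (hLip : ∀ a b : EuclideanSpace ℝ (Fin n), |u a - u b| ≤ L * ‖a - b‖)
    (hSC : ∀ a b : EuclideanSpace ℝ (Fin n), delta2 u a b ≤ C * ‖b‖ ^ 2)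
    (x : EuclideanSpace ℝ (Fin n))
    (hEll : ∀ A : Matrix (Fin n) (Fin n) ℝ, A.PosDef → A.det = 1 →
      Integrable (fun y => kernelA s A u x y) ∧ η₀ ≤ (1 - s) * LA s A u x)
    (θ : ℝ) (hθ0 : 0 < θ)
    (hθ : θ < (mu0 n s L C η₀ / (n * mu1 s L C)) ^ (((n : ℝ) - 1) / (2 * s))) :
    sInf {z : ℝ | ∃ A : Matrix (Fin n) (Fin n) ℝ, A.PosDef ∧ A.det = 1 ∧ z = LA s A u x} =
      sInf {z : ℝ | ∃ A : Matrix (Fin n) (Fin n) ℝ, A.PosDef ∧ A.det = 1 ∧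
        (A - θ • (1 : Matrix (Fin n) (Fin n) ℝ)).PosSemidef ∧ z = LA s A u x} := by
  refine csInf_eq_csInf_of_forall_exists_le ?_ ?_
  · rintro _ ⟨A, hA, hdet, rfl⟩
    by_cases hAθ : (A - θ • (1 : Matrix (Fin n) (Fin n) ℝ)).PosSemidef
    · exact ⟨_, ⟨A, hA, hdet, hAθ, rfl⟩, le_rfl⟩
    · have hθ₁ : θ ≤ 1 :=
        hθ.le.trans (mu0_div_mul_mu1_rpow_le_one hn hs hs1 hL hC hη hLip hSC hEll)
      exact ⟨_, ⟨1, .one, Matrix.det_one, posSemidef_one_sub_smul_one hθ₁, rfl⟩,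
        LA_one_le_LA_of_not_posSemidef_sub hn hs hs1 hL hC hη hLip hSC hEll hθ.le hA hdet hAθ⟩
  · rintro _ ⟨A, hA, hdet, -, rfl⟩
    exact ⟨_, ⟨A, hA, hdet, rfl⟩, le_rfl⟩
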